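/- arXiv:0811.1416 — 2 statements merged into one kernel-verified Lean document; each statement's English description precedes it below -/
import Mathlib

section
/- Let q ≥ 1 be an integer, α > 0, and let B^q be the closed unit ball in ℝ^q. Let F : B^q → ℝ^q be a continuous map of the form F(x) = A(x) + G(x), where A : ℝ^q → ℝ^q is linear with ‖A(x)‖ ≥ α·‖x‖ for all x, and ‖G(x)‖ ≤ α·‖x‖/2 for all x ∈ B^q. Then the image F(B^q) contains the closed ball of radius α/2 centered at the origin. -/
open MeasureTheory Finset
open scoped RealInnerProductSpace

noncomputable section
attribute [local instance] Classical.propDecidable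

/-- Euclidean space `ℝ^{d+1}`. -/
abbrev Euc (d : ℕ) := EuclideanSpace ℝ (Fin (d + 1))

/-- The unit sphere `S^d ⊆ ℝ^{d+1}`. -/
abbrev Sph (d : ℕ) := Metric.sphere (0 : Euc d) 1

/-- Real-valued functions on the sphere. -/
abbrev SphFun (d : ℕ) := Sph d → ℝ

/-- The normalized surface measure `μ_d` on `S^d`. -/
noncomputable def muSph (d : ℕ) : Measure (Sph d) :=
  ((volume : Measure (Euc d)).toSphere Set.univ)⁻¹ • (volume : Measure (Euc d)).toSphere

/-- Gegenbauer polynomials `C_k^α`, normalized so that `C_k^α(1) = binom(2α+k-1, k)`,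
defined by the standard three-term recurrence. -/
noncomputable def gegenbauer (α : ℝ) : ℕ → Polynomial ℝ
  | 0 => 1
  | 1 => Polynomial.C (2 * α) * Polynomial.X
  | n + 2 =>
      Polynomial.C (2 * ((n : ℝ) + 1 + α) / ((n : ℝ) + 2)) *
          (Polynomial.X * gegenbauer α (n + 1)) -
        Polynomial.C (((n : ℝ) + 2 * α) / ((n : ℝ) + 2)) * gegenbauer α n

/-- `dim H_k = ((2k+d-1)/(k+d-1))·binom(d+k-1, k)`. -/
noncomputable def dimHarm (d k : ℕ) : ℝ :=
  ((2 * (k : ℝ) + d - 1) / ((k : ℝ) + d - 1)) * (Nat.choose (d + k - 1) k : ℝ)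

/-- The kernel polynomial `g_w(t) = Σ_{k=1}^n dim H_k / (w_k G_k^α(1)) · G_k^α(t)`,
with `α = (d-1)/2` and `w_k = k(k+d-1)`. -/
noncomputable def gw (d n : ℕ) : Polynomial ℝ :=
  ∑ k ∈ Finset.Icc 1 n,
    Polynomial.C (dimHarm d k /
        (((k : ℝ) * ((k : ℝ) + d - 1)) * (gegenbauer (((d : ℝ) - 1) / 2) k).eval 1)) *
      gegenbauer (((d : ℝ) - 1) / 2) k

/-- The Laplace operator on polynomials in `d+1` variables. -/
noncomputable def polyLaplacian (d : ℕ) (p : MvPolynomial (Fin (d + 1)) ℝ) :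
    MvPolynomial (Fin (d + 1)) ℝ :=
  ∑ i : Fin (d + 1), MvPolynomial.pderiv i (MvPolynomial.pderiv i p)

/-- The space `H_k` of spherical harmonics of degree `k` on `S^d`: restrictions to the
sphere of harmonic homogeneous polynomials of degree `k`. -/
def sphHarmonic (d k : ℕ) : Set (SphFun d) :=
  {f | ∃ p : MvPolynomial (Fin (d + 1)) ℝ, p.IsHomogeneous k ∧ polyLaplacian d p = 0 ∧
        ∀ x : Sph d, f x = MvPolynomial.eval (fun i => (x : Euc d) i) p}

/-- The space `P_n`: restrictions to `S^d` of polynomials of total degree at most `n`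
having zero mean over the sphere. -/
def PolySph (d n : ℕ) : Set (SphFun d) :=
  {f | ∃ p : MvPolynomial (Fin (d + 1)) ℝ, p.totalDegree ≤ n ∧
        (∀ x : Sph d, f x = MvPolynomial.eval (fun i => (x : Euc d) i) p) ∧
        ∫ x, f x ∂muSph d = 0}

/-- The `H_k`-component of `P ∈ P_n` in the decomposition `P_n = ⊕_{k=1}^n H_k`
(the decomposition is unique; an arbitrary one is chosen if it exists). -/
noncomputable def harmComponent (d n : ℕ) (P : SphFun d) (k : ℕ) : SphFun d :=
  if h : ∃ c : ℕ → SphFun d, (∀ j, c j ∈ sphHarmonic d j) ∧ P = ∑ j ∈ Finset.Icc 1 n, c j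
  then h.choose k else 0

/-- The inner product `⟨P,Q⟩_w = Σ_{k=1}^n w_k ∫ P_k Q_k dμ_d` with `w_k = k(k+d-1)`. -/
noncomputable def innerW (d n : ℕ) (P Q : SphFun d) : ℝ :=
  ∑ k ∈ Finset.Icc 1 n, ((k : ℝ) * ((k : ℝ) + d - 1)) *
    ∫ x, harmComponent d n P k x * harmComponent d n Q k x ∂muSph d

/-- The norm `‖P‖_w = ⟨P,P⟩_w^{1/2}`. -/
noncomputable def normW (d n : ℕ) (P : SphFun d) : ℝ :=
  Real.sqrt (innerW d n P P)

/-- The function `G_x(y) = g_w((x,y))` on the sphere, for `x ∈ ℝ^{d+1}`. -/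
noncomputable def GxFun (d n : ℕ) (x : Euc d) : SphFun d :=
  fun y => (gw d n).eval ⟪x, (y : Euc d)⟫

/-- The extension of a function on the sphere to `ℝ^{d+1} \ {0}` by `x ↦ f(x/‖x‖)`
(with value `0` at the origin). -/
noncomputable def extendSph (d : ℕ) (f : SphFun d) : Euc d → ℝ :=
  fun x =>
    if hx : x = 0 then 0
    else f ⟨‖x‖⁻¹ • x, by
      rw [mem_sphere_zero_iff_norm, norm_smul, norm_inv, norm_norm,
        inv_mul_cancel₀ (norm_ne_zero_iff.mpr hx)]⟩

/-- The spherical gradient `∇f(x) = (∂/∂x) f(x/‖x‖)`. -/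
noncomputable def sphGrad (d : ℕ) (f : SphFun d) (x : Euc d) : Euc d :=
  gradient (extendSph d f) x

/-- The spherical Hessian quadratic form `∇²f(x)·y·y`. -/
noncomputable def sphHessApply (d : ℕ) (f : SphFun d) (x y : Euc d) : ℝ :=
  iteratedFDeriv ℝ 2 (extendSph d f) x ![y, y]

/-- `‖∇²f(x₀)‖ = max { |∇²f(x₀)·y·y| : ‖y‖ = 1, (y,x₀) = 0 }`. -/
noncomputable def sphHessNorm (d : ℕ) (f : SphFun d) (x₀ : Sph d) : ℝ :=
  sSup {r : ℝ | ∃ y : Euc d, ‖y‖ = 1 ∧ ⟪y, (x₀ : Euc d)⟫ = 0 ∧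
    r = |sphHessApply d f (x₀ : Euc d) y|}

/-- `x_1, …, x_N ∈ S^d` form a spherical `n`-design. -/
def IsSphericalDesign (d n N : ℕ) (x : Fin N → Sph d) : Prop :=
  ∀ p : MvPolynomial (Fin (d + 1)) ℝ, p.totalDegree ≤ n →
    ∫ y, MvPolynomial.eval (fun j => (y : Euc d) j) p ∂muSph d =
      (N : ℝ)⁻¹ * ∑ i, MvPolynomial.eval (fun j => ((x i : Euc d)) j) p

/-- An area-regular partition `R_1, …, R_N` of `S^d`: closed sets with pairwise disjoint
interiors, covering the sphere, each of normalized measure `1/N`. -/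
def IsAreaRegularPartition (d N : ℕ) (R : Fin N → Set (Sph d)) : Prop :=
  (∀ i, IsClosed (R i)) ∧ (⋃ i, R i) = Set.univ ∧
    (∀ i j, i ≠ j → interior (R i) ∩ interior (R j) = ∅) ∧
    ∀ i, muSph d (R i) = 1 / N

/-- The Marcinkiewicz–Zygmund property of degree `m` for points `x_1, …, x_N ∈ S^d`. -/
def MZProperty (d m N : ℕ) (x : Fin N → Sph d) : Prop :=
  ∀ p : MvPolynomial (Fin (d + 1)) ℝ, p.totalDegree ≤ m →
    (1 / 2) * (∫ y, |MvPolynomial.eval (fun j => (y : Euc d) j) p| ∂muSph d) ≤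
        (N : ℝ)⁻¹ * ∑ i, |MvPolynomial.eval (fun j => ((x i : Euc d)) j) p| ∧
      (N : ℝ)⁻¹ * ∑ i, |MvPolynomial.eval (fun j => ((x i : Euc d)) j) p| ≤
        (3 / 2) * ∫ y, |MvPolynomial.eval (fun j => (y : Euc d) j) p| ∂muSph d

/-- The point `x_i(P)`: move `x` along the great circle in the direction of the spherical
gradient `∇P(x)` through angle `‖∇P(x)‖`. -/
noncomputable def movePoint (d : ℕ) (P : SphFun d) (x : Sph d) : Euc d :=
  if _h : sphGrad d P (x : Euc d) = 0 then (x : Euc d)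
  else Real.cos ‖sphGrad d P (x : Euc d)‖ • (x : Euc d) +
    Real.sin ‖sphGrad d P (x : Euc d)‖ • (‖sphGrad d P (x : Euc d)‖⁻¹ • sphGrad d P (x : Euc d))

/-- The map `L(P) = (1/N) Σ_i G_{x_i(P)}`. -/
noncomputable def Lmap (d n N : ℕ) (x : Fin N → Sph d) (P : SphFun d) : SphFun d :=
  (N : ℝ)⁻¹ • ∑ i, GxFun d n (movePoint d P (x i))

end

namespace BrouwerAux

abbrev V (q : ℕ) := EuclideanSpace ℝ (Fin q)

noncomputable def P {q : ℕ} (x : V q) : V q := (max 1 ‖x‖)⁻¹ • x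

lemma norm_P_le {q : ℕ} (x : V q) : ‖P x‖ ≤ 1 := by
  have h : 0 < max 1 ‖x‖ := lt_of_lt_of_le one_pos (le_max_left _ _)
  rw [P, norm_smul, norm_inv, Real.norm_of_nonneg h.le, inv_mul_le_iff₀ h, mul_one]
  exact le_max_right _ _

lemma P_of_le {q : ℕ} {x : V q} (hx : ‖x‖ ≤ 1) : P x = x := by
  simp [P, max_eq_left hx]

lemma norm_P_of_ge {q : ℕ} {x : V q} (hx : 1 ≤ ‖x‖) : ‖P x‖ = 1 := by
  have h : 0 < ‖x‖ := by linarith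
  rw [P, max_eq_right hx, norm_smul, norm_inv, norm_norm, inv_mul_cancel₀ h.ne']

lemma P_inner {q : ℕ} (x z : V q) (hz : ‖z‖ ≤ 1) : ⟪x - P x, z - P x⟫ ≤ 0 := by
  rcases le_total ‖x‖ 1 with h | h
  · simp [P_of_le h]
  · have h0 : 0 < ‖x‖ := by linarith
    have e : x - P x = (‖x‖ - 1) • P x := by
      rw [sub_smul, one_smul]; congr 1
      rw [P, max_eq_right h, smul_smul, mul_inv_cancel₀ h0.ne', one_smul]
    rw [e, real_inner_smul_left, inner_sub_right, real_inner_self_eq_norm_sq, norm_P_of_ge h]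
    have := real_inner_le_norm (P x) z
    rw [norm_P_of_ge h] at this
    nlinarith

lemma P_lip {q : ℕ} : LipschitzWith 1 (P : V q → V q) := by
  apply LipschitzWith.of_dist_le_mul
  intro x y
  rw [dist_eq_norm, dist_eq_norm, NNReal.coe_one, one_mul]
  have h1 := P_inner x (P y) (norm_P_le y)
  have h2 := P_inner y (P x) (norm_P_le x)
  have h3 := real_inner_le_norm (x - y) (P x - P y)
  have h4 : ‖P x - P y‖ ^ 2 ≤ ⟪x - y, P x - P y⟫ := by
    rw [← real_inner_self_eq_norm_sq]
    simp only [inner_sub_left, inner_sub_right] at *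
    linarith
  by_contra! hlt
  have : 0 < ‖P x - P y‖ := lt_of_le_of_lt (norm_nonneg _) hlt
  nlinarith

lemma interp (q : ℕ) (T : ℝ) (hT : 0 < T) : ∃ (s : Finset ℝ) (w : ℝ → ℝ),
    (∀ t ∈ s, 0 < t ∧ t ≤ T) ∧ ∑ t ∈ s, w t = 1 ∧
    ∀ M : V q →L[ℝ] V q, (1 + M).det = ∑ t ∈ s, w t * (1 + t • M).det := by
  obtain ⟨s, hs, hc⟩ := (Set.Ioc_infinite hT).exists_subset_card_eq (q + 1)
  have hne : s.Nonempty := by rw [← Finset.card_pos]; omega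
  have hinj : Set.InjOn (id : ℝ → ℝ) s := Set.injOn_id _
  refine ⟨s, fun t => (Lagrange.basis s id t).eval 1, fun t ht => hs ht, ?_, ?_⟩
  · rw [← Polynomial.eval_finsetSum, Lagrange.sum_basis hinj hne]; simp
  · intro M
    set A : Matrix (Fin q) (Fin q) ℝ :=
      LinearMap.toMatrix (EuclideanSpace.basisFun (Fin q) ℝ).toBasis
        (EuclideanSpace.basisFun (Fin q) ℝ).toBasis M.toLinearMap with hA
    set p : Polynomial ℝ :=
      Matrix.det ((Polynomial.X : Polynomial ℝ) • A.map Polynomial.C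
        + (1 : Matrix (Fin q) (Fin q) ℝ).map Polynomial.C) with hp
    have hev : ∀ t : ℝ, p.eval t = (1 + t • M).det := by
      intro t
      have : (1 + t • M).det = Matrix.det (t • A + 1) := by
        rw [ContinuousLinearMap.det, ← LinearMap.det_toMatrix
          (EuclideanSpace.basisFun (Fin q) ℝ).toBasis]
        congr 1
        rw [ContinuousLinearMap.toLinearMap_add, ContinuousLinearMap.toLinearMap_smul, map_add,
          map_smul, ContinuousLinearMap.toLinearMap_one, LinearMap.toMatrix_one, add_comm]
      rw [this, hp, ← Polynomial.coe_evalRingHom, RingHom.map_det]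
      congr 1
      ext i j
      rcases eq_or_ne i j with rfl | hij
      · simp; ring
      · simp [Matrix.one_apply_ne hij]; ring
    have hdeg : p.degree < #s := by
      rw [hc]
      refine lt_of_le_of_lt (Polynomial.degree_le_natDegree) ?_
      have := Polynomial.natDegree_det_X_add_C_le A 1
      rw [Fintype.card_fin] at this
      exact_mod_cast Nat.lt_succ_of_le this
    have h1 := hev 1
    rw [one_smul] at h1
    rw [← h1]
    conv_lhs => rw [Lagrange.eq_interpolate hinj hdeg]
    rw [Lagrange.interpolate_apply, Polynomial.eval_finsetSum]
    refine Finset.sum_congr rfl fun t _ => ?_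
    rw [Polynomial.eval_mul, Polynomial.eval_C, id, hev, mul_comm]


lemma key {q : ℕ} (g : V q → V q) (C : NNReal)
    (hd : ∀ x ∈ Metric.closedBall (0 : V q) 1, DifferentiableAt ℝ g x)
    (hlip : LipschitzOnWith C g (Metric.closedBall 0 1))
    (hbd : ∀ x ∈ Metric.closedBall (0 : V q) 1, ‖fderiv ℝ g x‖ ≤ C)
    (hS : ∀ x, ‖x‖ = 1 → g x = 0)
    (hB : ∀ x ∈ Metric.closedBall (0 : V q) 1, ‖x + g x‖ ≤ 1)
    (t : ℝ) (ht0 : 0 < t) (ht1 : t ≤ 1) (htC : t * C < 1) :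
    ∫ x in Metric.closedBall (0 : V q) 1, (1 + t • fderiv ℝ g x).det =
      (volume : Measure (V q)).real (Metric.closedBall 0 1) := by
  set B := Metric.closedBall (0 : V q) 1 with hBdef
  set f : V q → V q := fun x => x + t • g x with hf
  have hmem : ∀ x : V q, x ∈ B ↔ ‖x‖ ≤ 1 := fun x => by simp [hBdef]
  have hinj : Set.InjOn f B := by
    intro x hx y hy hxy
    have h1 := hlip.dist_le_mul x hx y hy
    rw [dist_eq_norm, dist_eq_norm] at h1
    have h2 : x - y = - (t • (g x - g y)) := by
      simp only [hf] at hxy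
      rw [smul_sub, neg_sub]
      rw [sub_eq_sub_iff_add_eq_add, hxy, add_comm]
    have h3 : ‖x - y‖ = t * ‖g x - g y‖ := by
      conv_lhs => rw [h2]
      rw [norm_neg, norm_smul, Real.norm_of_nonneg ht0.le]
    have h4 : ‖x - y‖ ≤ (t * C) * ‖x - y‖ := by
      rw [mul_assoc]; conv_lhs => rw [h3]
      exact mul_le_mul_of_nonneg_left h1 ht0.le
    have h5 : ‖x - y‖ = 0 := by nlinarith [norm_nonneg (x - y)]
    exact sub_eq_zero.mp (norm_eq_zero.mp h5)
  have himg : f '' B = B := by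
    apply Set.Subset.antisymm
    · rintro _ ⟨x, hx, rfl⟩
      rw [hmem]
      have e : f x = (1 - t) • x + t • (x + g x) := by
        simp only [hf, smul_add, sub_smul, one_smul]; abel
      rw [e]
      refine (norm_add_le _ _).trans ?_
      rw [norm_smul, norm_smul, Real.norm_of_nonneg ht0.le, Real.norm_of_nonneg (by linarith)]
      have h1 := hB x hx
      have h2 := (hmem x).1 hx
      nlinarith
    · intro y hy
      have hcl : LipschitzWith (t.toNNReal * C) (fun x : V q => y - t • g (P x)) := by
        apply LipschitzWith.of_dist_le_mul
        intro a b
        have h1 := hlip.dist_le_mul (P a) ((hmem _).2 (norm_P_le a)) (P b)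
          ((hmem _).2 (norm_P_le b))
        have h2 := P_lip.dist_le_mul a b
        rw [NNReal.coe_one, one_mul] at h2
        rw [dist_sub_left, dist_smul₀, Real.norm_of_nonneg ht0.le, NNReal.coe_mul]
        calc t * dist (g (P a)) (g (P b)) ≤ t * (C * dist a b) := by gcongr; exact h1.trans (by gcongr)
          _ = _ := by rw [Real.coe_toNNReal _ ht0.le]; ring
      have hcon : ContractingWith (t.toNNReal * C) (fun x : V q => y - t • g (P x)) :=
        ⟨by rw [← NNReal.coe_lt_coe]; simpa [Real.coe_toNNReal _ ht0.le] using htC, hcl⟩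
      have hfix := hcon.fixedPoint_isFixedPt
      set x := ContractingWith.fixedPoint _ hcon
      have hx : y - t • g (P x) = x := hfix
      have hx1 : ‖x‖ ≤ 1 := by
        by_contra! hlt
        rw [hS _ (norm_P_of_ge hlt.le), smul_zero, sub_zero] at hx
        rw [← hx] at hlt
        exact absurd ((hmem y).1 hy) (not_le.2 hlt)
      refine ⟨x, (hmem x).2 hx1, ?_⟩
      rw [P_of_le hx1] at hx
      simp only [hf]
      rw [← sub_eq_iff_eq_add.1 hx]
  have hder : ∀ x ∈ B, HasFDerivWithinAt f (1 + t • fderiv ℝ g x) B x := by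
    intro x hx
    exact ((hasFDerivAt_id x).add ((hd x hx).hasFDerivAt.const_smul t)).hasFDerivWithinAt
  have hpos : ∀ x ∈ B, 0 < (1 + t • fderiv ℝ g x).det := by
    intro x hx
    have hne : ∀ s ∈ Set.Icc 0 t, (1 + s • fderiv ℝ g x).det ≠ 0 := by
      intro s hs h0
      obtain ⟨v, hv, hv0⟩ : ∃ v ∈ LinearMap.ker (1 + s • fderiv ℝ g x).toLinearMap, v ≠ 0 := by
        have := LinearMap.bot_lt_ker_of_det_eq_zero h0
        exact Submodule.exists_mem_ne_zero_of_ne_bot this.ne'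
      have h1 : v + s • fderiv ℝ g x v = 0 := by simpa using hv
      have h2 : ‖v‖ = s * ‖fderiv ℝ g x v‖ := by
        rw [eq_neg_of_add_eq_zero_left h1, norm_neg, norm_smul, Real.norm_of_nonneg hs.1,
          ← eq_neg_of_add_eq_zero_left h1]
      have h3 := (fderiv ℝ g x).le_of_opNorm_le (hbd x hx) v
      have h4 : 0 < ‖v‖ := norm_pos_iff.2 hv0
      have h5 : s * ‖fderiv ℝ g x v‖ ≤ t * (C * ‖v‖) :=
        mul_le_mul hs.2 h3 (norm_nonneg _) ht0.le
      nlinarith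
    by_contra! hle
    have hc : ContinuousOn (fun s : ℝ => (1 + s • fderiv ℝ g x).det) (Set.Icc 0 t) := by
      apply Continuous.continuousOn
      exact ContinuousLinearMap.continuous_det.comp (by fun_prop)
    have := intermediate_value_Icc' ht0.le hc
    obtain ⟨s, hs, h⟩ := this (show (0 : ℝ) ∈ _ from ⟨hle, by simp [ContinuousLinearMap.det]⟩)
    exact hne s hs h
  have hcv := integral_image_eq_integral_abs_det_fderiv_smul (volume : Measure (V q))
    (Metric.isClosed_closedBall.measurableSet) hder hinj (fun _ => (1 : ℝ))
  rw [himg] at hcv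
  rw [setIntegral_const, smul_eq_mul, mul_one] at hcv
  rw [hcv]
  refine setIntegral_congr_fun Metric.isClosed_closedBall.measurableSet fun x hx => ?_
  simp [abs_of_pos (hpos x hx)]

lemma no_retraction {q : ℕ} (r : V q → V q)
    (hr : ∀ x ∈ Metric.closedBall (0 : V q) 1, ContDiffAt ℝ 1 r x)
    (hn : ∀ x ∈ Metric.closedBall (0 : V q) 1, ‖r x‖ = 1)
    (hS : ∀ x, ‖x‖ = 1 → r x = x) : False := by
  set B := Metric.closedBall (0 : V q) 1 with hBdef
  set g : V q → V q := fun x => r x - x with hg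
  have hgc : ∀ x ∈ B, ContDiffAt ℝ 1 g x := fun x hx => (hr x hx).sub contDiffAt_id
  have hgd : ∀ x ∈ B, DifferentiableAt ℝ g x := fun x hx => (hgc x hx).differentiableAt (by simp)
  have hcont : ContinuousOn (fderiv ℝ g) B := fun x hx =>
    ((hgc x hx).fderiv_right (m := 0) (by simp)).continuousAt.continuousWithinAt
  have hcomp : IsCompact B := isCompact_closedBall _ _
  obtain ⟨C0, hC0⟩ := hcomp.exists_bound_of_continuousOn hcont
  set C : NNReal := C0.toNNReal
  have hbd : ∀ x ∈ B, ‖fderiv ℝ g x‖ ≤ C := fun x hx => (hC0 x hx).trans (Real.le_coe_toNNReal _)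
  have hlip : LipschitzOnWith C g B :=
    (convex_closedBall _ _).lipschitzOnWith_of_nnnorm_fderiv_le hgd hbd
  obtain ⟨s, w, hs, hw, hdet⟩ := interp q (1 / (C + 1)) (by positivity)
  have hCp : (0 : ℝ) ≤ C := C.2
  have hk : ∀ t ∈ s, ∫ x in B, (1 + t • fderiv ℝ g x).det =
      (volume : Measure (V q)).real B := by
    intro t ht
    have ht' := (hs t ht).2
    rw [le_div_iff₀ (by positivity)] at ht'
    have h0 := (hs t ht).1
    exact key g C hgd hlip hbd (fun x hx => by simp [hg, hS x hx])
      (fun x hx => by simp [hg, hn x hx]) t h0 (by nlinarith) (by nlinarith)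
  have hint : ∀ t : ℝ, IntegrableOn (fun x => (1 + t • fderiv ℝ g x).det) B volume := by
    intro t
    apply ContinuousOn.integrableOn_compact hcomp
    exact ContinuousLinearMap.continuous_det.comp_continuousOn
      (continuousOn_const.add (hcont.const_smul t))
  have h1 : ∫ x in B, (1 + fderiv ℝ g x).det = (volume : Measure (V q)).real B := by
    rw [show (fun x => (1 + fderiv ℝ g x).det) = fun x => ∑ t ∈ s, w t * (1 + t • fderiv ℝ g x).det
      from funext fun x => hdet _]
    rw [integral_finsetSum _ (fun t _ => (hint t).const_mul (w t))]
    simp_rw [integral_const_mul]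
    rw [Finset.sum_congr rfl (fun t ht => by rw [hk t ht]), ← Finset.sum_mul, hw, one_mul]
  have h2 : ∫ x in B, (1 + fderiv ℝ g x).det = 0 := by
    have hae : (Metric.ball (0 : V q) 1 : Set (V q)) =ᵐ[volume] Metric.closedBall 0 1 := by
      refine ae_eq_of_subset_of_measure_ge Metric.ball_subset_closedBall
        (Measure.addHaar_unitClosedBall_eq_addHaar_unitBall _).le
        Metric.isOpen_ball.measurableSet.nullMeasurableSet
        (isCompact_closedBall _ _).measure_lt_top.ne
    rw [hBdef, ← setIntegral_congr_set hae]
    rw [setIntegral_congr_fun (g := fun _ => (0 : ℝ)) Metric.isOpen_ball.measurableSet]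
    · simp
    intro x hx
    have hxB : x ∈ B := Metric.ball_subset_closedBall hx
    have hrd : DifferentiableAt ℝ r x := (hr x hxB).differentiableAt (by simp)
    have e : 1 + fderiv ℝ g x = fderiv ℝ r x := by
      have : fderiv ℝ g x = fderiv ℝ r x - 1 :=
        (hrd.hasFDerivAt.sub (hasFDerivAt_id x)).fderiv
      rw [this]; abel
    simp only [e]
    by_contra hne
    have hsurj : Function.Surjective (fderiv ℝ r x) :=
      (LinearMap.equivOfDetNeZero (fderiv ℝ r x).toLinearMap hne).surjective
    obtain ⟨v, hv⟩ := hsurj (r x)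
    have hinner : HasFDerivAt (fun y => ⟪r y, r y⟫) _ x := hrd.hasFDerivAt.inner ℝ hrd.hasFDerivAt
    have hconst : HasFDerivAt (fun y => ⟪r y, r y⟫) (0 : V q →L[ℝ] ℝ) x := by
      refine (hasFDerivAt_const (1 : ℝ) x).congr_of_eventuallyEq ?_
      filter_upwards [Metric.isOpen_ball.mem_nhds hx] with y hy
      rw [real_inner_self_eq_norm_sq, hn y (Metric.ball_subset_closedBall hy)]; norm_num
    have := congrArg (fun L => L v) (hinner.unique hconst)
    simp [hv, hn x hxB] at this
  rw [h1] at h2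
  have : 0 < (volume : Measure (V q)).real B :=
    ENNReal.toReal_pos (Metric.measure_closedBall_pos volume _ one_pos).ne' hcomp.measure_lt_top.ne
  linarith

lemma smooth_fix {q : ℕ} (K : V q → V q) (hK : ContDiff ℝ 1 K)
    (hB : ∀ x ∈ Metric.closedBall (0 : V q) 1, ‖K x‖ < 1) :
    ∃ x ∈ Metric.closedBall (0 : V q) 1, K x = x := by
  by_contra! hno
  set u : V q → V q := fun x => x - K x with hu
  have hu0 : ∀ x ∈ Metric.closedBall (0 : V q) 1, 0 < ‖u x‖ ^ 2 := fun x hx => by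
    have : u x ≠ 0 := sub_ne_zero.2 (hno x hx).symm
    positivity
  have huc : ContDiff ℝ 1 u := contDiff_id.sub hK
  set D : V q → ℝ := fun x => ⟪x, u x⟫ ^ 2 + ‖u x‖ ^ 2 * (1 - ‖x‖ ^ 2) with hD
  have hDc : ContDiff ℝ 1 D :=
    ((contDiff_id.inner ℝ huc).pow 2).add
      ((huc.norm_sq ℝ).mul (contDiff_const.sub (contDiff_id.norm_sq ℝ)))
  have hsp : ∀ x : V q, ‖x‖ = 1 → 0 < ⟪x, u x⟫ := by
    intro x hx
    have h1 := hB x (by simp [hx])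
    have h2 := real_inner_le_norm x (K x)
    simp only [hu, inner_sub_right, real_inner_self_eq_norm_sq]
    rw [hx] at *
    linarith
  have hDp : ∀ x ∈ Metric.closedBall (0 : V q) 1, 0 < D x := by
    intro x hx
    have hx1 : ‖x‖ ≤ 1 := by simpa using hx
    have h0 := hu0 x hx
    rcases hx1.lt_or_eq with h | h
    · have : 0 < 1 - ‖x‖ ^ 2 := by nlinarith [norm_nonneg x]
      simp only [hD]; positivity
    · have := hsp x h
      simp only [hD, h]; norm_num; positivity
  set l : V q → ℝ := fun x => (-⟪x, u x⟫ + √(D x)) / ‖u x‖ ^ 2 with hl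
  refine no_retraction (fun x => x + l x • u x) ?_ ?_ ?_
  · intro x hx
    have h1 : ContDiffAt ℝ 1 l x :=
      (((contDiff_id.inner ℝ huc).contDiffAt.neg).add
        (hDc.contDiffAt.sqrt (hDp x hx).ne')).div (huc.norm_sq ℝ).contDiffAt (hu0 x hx).ne'
    exact contDiffAt_id.add (h1.smul huc.contDiffAt)
  · intro x hx
    have h1 : ‖x + l x • u x‖ ^ 2 = 1 := by
      rw [norm_add_sq_real, norm_smul, mul_pow, inner_smul_right, Real.norm_eq_abs, sq_abs]
      have h2 := Real.sq_sqrt (hDp x hx).le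
      have h3 := hu0 x hx
      have h4 : l x * ‖u x‖ ^ 2 = -⟪x, u x⟫ + √(D x) := div_mul_cancel₀ _ h3.ne'
      have h5 : √(D x) = l x * ‖u x‖ ^ 2 + ⟪x, u x⟫ := by linarith
      rw [h5] at h2
      simp only [hD] at h2
      have h6 : ‖u x‖ ^ 2 * (‖x‖ ^ 2 + 2 * (l x * ⟪x, u x⟫) + l x ^ 2 * ‖u x‖ ^ 2 - 1) = 0 := by
        linear_combination h2
      rcases mul_eq_zero.1 h6 with h | h
      · exact absurd h h3.ne'
      · linarith
    nlinarith [norm_nonneg (x + l x • u x)]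
  · intro x hx
    have h1 := hsp x hx
    have : l x = 0 := by
      simp only [hl, hD, hx]
      norm_num [Real.sqrt_sq h1.le]
    simp [this]

lemma brouwer {q : ℕ} (K : V q → V q) (hK : ContinuousOn K (Metric.closedBall 0 1))
    (hB : ∀ x ∈ Metric.closedBall (0 : V q) 1, ‖K x‖ ≤ 1) :
    ∃ x ∈ Metric.closedBall (0 : V q) 1, K x = x := by
  have hcomp : IsCompact (Metric.closedBall (0 : V q) 1) := isCompact_closedBall _ _
  obtain ⟨x₀, hx₀, hmin⟩ := hcomp.exists_isMinOn ⟨0, by simp⟩ (hK.sub continuousOn_id).norm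
  refine ⟨x₀, hx₀, ?_⟩
  by_contra hne
  have hm : 0 < ‖K x₀ - x₀‖ := norm_pos_iff.2 (sub_ne_zero.2 hne)
  set ε : ℝ := ‖K x₀ - x₀‖ / 2 with hε
  have hεp : 0 < ε := by positivity
  have hPm : ∀ x : V q, P x ∈ Metric.closedBall (0 : V q) 1 := fun x => by simpa using norm_P_le x
  have huc : UniformContinuous (fun x => K (P x)) := by
    rw [← uniformContinuousOn_univ]
    exact (hcomp.uniformContinuousOn_of_continuous hK).comp
      P_lip.uniformContinuous.uniformContinuousOn (fun x _ => hPm x)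
  obtain ⟨k, hkc, hk⟩ := huc.exists_contDiff_dist_le hεp
  have hk1 : ∀ x, ‖k x‖ < 1 + ε := by
    intro x
    have h1 := hk x
    rw [dist_eq_norm] at h1
    have h2 := norm_le_norm_add_norm_sub' (k x) (K (P x))
    have h3 := hB _ (hPm x)
    linarith
  obtain ⟨x, hx, hfix⟩ := smooth_fix (fun x => (1 + ε)⁻¹ • k x)
    ((hkc.of_le (by exact_mod_cast le_top)).const_smul _) (fun x _ => by
      rw [norm_smul, norm_inv, Real.norm_of_nonneg (by positivity), inv_mul_lt_iff₀ (by positivity)]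
      simpa using hk1 x)
  have hx1 : ‖x‖ ≤ 1 := by simpa using hx
  have hkx : k x = (1 + ε) • x := by
    rw [← hfix, smul_smul, mul_inv_cancel₀ (by positivity), one_smul, hfix]
  have h1 := hk x
  rw [P_of_le hx1, dist_eq_norm, hkx, norm_sub_rev] at h1
  have h2 : ‖K x - x‖ ≤ ‖K x - (1 + ε) • x‖ + ‖ε • x‖ := by
    refine le_trans (le_of_eq ?_) (norm_add_le _ _)
    congr 1
    rw [add_smul, one_smul]; abel
  rw [norm_smul, Real.norm_of_nonneg hεp.le] at h2
  have h3 : ‖K x₀ - x₀‖ ≤ ‖K x - x‖ := hmin hx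
  nlinarith

end BrouwerAux

/-- If `F = A + G` on the closed unit ball `B^q`, `F` continuous on `B^q`,
`A` linear with `‖A x‖ ≥ α‖x‖` for all `x`, and `‖G x‖ ≤ α‖x‖/2` on `B^q`, then the image
`F(B^q)` contains the closed ball of radius `α/2` centered at the origin. -/
theorem statement1 (q : ℕ) (hq : 1 ≤ q) (α : ℝ) (hα : 0 < α)
    (F G : EuclideanSpace ℝ (Fin q) → EuclideanSpace ℝ (Fin q))
    (A : EuclideanSpace ℝ (Fin q) →ₗ[ℝ] EuclideanSpace ℝ (Fin q))
    (hF : ContinuousOn F (Metric.closedBall 0 1))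
    (hFAG : ∀ x ∈ Metric.closedBall (0 : EuclideanSpace ℝ (Fin q)) 1, F x = A x + G x)
    (hA : ∀ x : EuclideanSpace ℝ (Fin q), α * ‖x‖ ≤ ‖A x‖)
    (hG : ∀ x ∈ Metric.closedBall (0 : EuclideanSpace ℝ (Fin q)) 1, ‖G x‖ ≤ α * ‖x‖ / 2) :
    Metric.closedBall (0 : EuclideanSpace ℝ (Fin q)) (α / 2) ⊆
      F '' Metric.closedBall 0 1 := by
  intro y hy
  have hy' : ‖y‖ ≤ α / 2 := by simpa using hy
  have hinj : Function.Injective A := by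
    rw [injective_iff_map_eq_zero]
    intro x hx
    have := hA x
    rw [hx, norm_zero] at this
    exact norm_eq_zero.1 (by nlinarith [norm_nonneg x])
  set e := LinearEquiv.ofInjectiveEndo A hinj with he
  have hAe : ∀ z, A (e.symm z) = z := fun z => e.apply_symm_apply z
  have hGc : ContinuousOn G (Metric.closedBall 0 1) := by
    refine (hF.sub (A.continuous_of_finiteDimensional.continuousOn)).congr fun x hx => ?_
    simp [hFAG x hx]
  obtain ⟨x, hx, hfix⟩ := BrouwerAux.brouwer (fun x => e.symm (y - G x))
    (e.symm.toLinearMap.continuous_of_finiteDimensional.comp_continuousOn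
      (continuousOn_const.sub hGc)) (by
      intro x hx
      have h1 := hA (e.symm (y - G x))
      rw [hAe] at h1
      have h2 := norm_sub_le y (G x)
      have h3 := hG x hx
      have hx1 : ‖x‖ ≤ 1 := by simpa using hx
      have h4 : α * ‖e.symm (y - G x)‖ ≤ α * 1 := by nlinarith
      exact le_of_mul_le_mul_left h4 hα)
  refine ⟨x, hx, ?_⟩
  have h := hAe (y - G x)
  have hfix' : e.symm (y - G x) = x := hfix
  rw [hfix'] at h
  rw [hFAG x hx, h]
  abel
end

section
/- For every integer d ≥ 1 there is a constant b_d depending only on d such that for every n ≥ 1 and every N ≥ 1 there exist an area-regular partition R = {R_1,…,R_N} of S^d and points x_i ∈ R_i (i = 1,…,N) with ‖(1/N)(G_{x_1}+…+G_{x_N})‖_w ≤ b_d·n^{d/2}/N^{1/2+1/d}; equivalently, (1/N²)·Σ_{i,j=1}^N g_w((x_i,x_j)) ≤ b_d²·n^d/N^{1+2/d}. -/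
open MeasureTheory Finset
open scoped RealInnerProductSpace

noncomputable section
attribute [local instance] Classical.propDecidable

end


open MvPolynomial in
/-- linear form `a·y`. -/
noncomputable def linF {d : ℕ} (a : Euc d) : MvPolynomial (Fin (d + 1)) ℝ :=
  ∑ i, C (a i) * X i

open MvPolynomial in
/-- `|y|²`. -/
noncomputable def sqN (d : ℕ) : MvPolynomial (Fin (d + 1)) ℝ := ∑ i, X i ^ 2

open MvPolynomial in
/-- directional derivative. -/
noncomputable def dirD {d : ℕ} (a : Euc d) (p : MvPolynomial (Fin (d + 1)) ℝ) :
    MvPolynomial (Fin (d + 1)) ℝ := ∑ i, C (a i) * pderiv i p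

open MvPolynomial in
/-- Zonal harmonic polynomial. -/
noncomputable def zon {d : ℕ} (a : Euc d) : ℕ → MvPolynomial (Fin (d + 1)) ℝ
  | 0 => 1
  | 1 => C ((d : ℝ) - 1) * linF a
  | k + 2 => C ((2 * (k : ℝ) + d + 1) / ((k : ℝ) + 2)) * (linF a * zon a (k + 1)) -
      C (((k : ℝ) + d - 1) / ((k : ℝ) + 2)) * (sqN d * zon a k)

section algebra
open MvPolynomial

variable {d : ℕ}

lemma linF_hom (a : Euc d) : (linF a).IsHomogeneous 1 := by
  unfold linF
  apply IsHomogeneous.sum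
  intro i _
  simpa using (isHomogeneous_C (Fin (d+1)) (a i)).mul (isHomogeneous_X ℝ i)

lemma sqN_hom : (sqN d).IsHomogeneous 2 := by
  unfold sqN
  apply IsHomogeneous.sum
  intro i _
  simpa using (isHomogeneous_X ℝ i).pow 2

lemma C_mul_hom {p : MvPolynomial (Fin (d + 1)) ℝ} {k : ℕ} (c : ℝ) (h : p.IsHomogeneous k) :
    (C c * p).IsHomogeneous k := by
  simpa using (isHomogeneous_C (Fin (d+1)) c).mul h

lemma zon_hom (a : Euc d) : ∀ k, (zon a k).IsHomogeneous k
  | 0 => by simpa [zon] using isHomogeneous_one (Fin (d+1)) ℝ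
  | 1 => by
      simp only [zon]
      exact C_mul_hom _ (linF_hom a)
  | k + 2 => by
      rw [zon]
      refine IsHomogeneous.sub (C_mul_hom _ ?_) (C_mul_hom _ ?_)
      · have := (linF_hom a).mul (zon_hom a (k + 1))
        rwa [show 1 + (k + 1) = k + 2 by ring] at this
      · have := (sqN_hom (d := d)).mul (zon_hom a k)
        rwa [show 2 + k = k + 2 by ring] at this

lemma pderiv_linF (a : Euc d) (i) : pderiv i (linF a) = C (a i) := by
  unfold linF
  rw [map_sum, Finset.sum_eq_single i]
  · simp
  · intro j _ hj
    simp [pderiv_X_of_ne hj]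
  · simp

lemma pderiv_sqN (i : Fin (d + 1)) : pderiv i (sqN d) = C 2 * X i := by
  unfold sqN
  rw [map_sum, Finset.sum_eq_single i]
  · rw [map_ofNat C 2]; simp
  · intro j _ hj
    simp [pderiv_X_of_ne hj]
  · simp

lemma dirD_add (a : Euc d) (p q) : dirD a (p + q) = dirD a p + dirD a q := by
  simp [dirD, mul_add, Finset.sum_add_distrib]
lemma dirD_sub (a : Euc d) (p q) : dirD a (p - q) = dirD a p - dirD a q := by
  simp [dirD, mul_sub, Finset.sum_sub_distrib]
lemma dirD_C_mul (a : Euc d) (c : ℝ) (p) : dirD a (C c * p) = C c * dirD a p := by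
  simp only [dirD, Derivation.leibniz, pderiv_C, smul_eq_mul, mul_zero, add_zero, Finset.mul_sum]
  exact Finset.sum_congr rfl fun i _ => by ring
lemma dirD_mul (a : Euc d) (p q) : dirD a (p * q) = dirD a p * q + p * dirD a q := by
  simp only [dirD, Derivation.leibniz, smul_eq_mul, Finset.mul_sum, Finset.sum_mul,
    ← Finset.sum_add_distrib]
  exact Finset.sum_congr rfl fun i _ => by ring
lemma norm_sq_sum (a : Euc d) (ha : ‖a‖ = 1) : ∑ i, a i * a i = 1 := by
  have := EuclideanSpace.real_norm_sq_eq a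
  rw [ha] at this
  rw [one_pow] at this
  rw [this]
  exact Finset.sum_congr rfl fun i _ => by ring
lemma dirD_linF (a : Euc d) (ha : ‖a‖ = 1) : dirD a (linF a) = 1 := by
  simp only [dirD, pderiv_linF, ← C_mul, ← map_sum, norm_sq_sum a ha, C_1]
lemma dirD_sqN (a : Euc d) : dirD a (sqN d) = C 2 * linF a := by
  simp only [dirD, pderiv_sqN, linF, Finset.mul_sum]
  exact Finset.sum_congr rfl fun i _ => by ring

lemma C_inj_of {x y : ℝ} (h : x = y) : (C x : MvPolynomial (Fin (d + 1)) ℝ) = C y := by rw [h]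

/-- `(k+2) Z_{k+2} = ...` -/
lemma zon_rec (a : Euc d) (k : ℕ) :
    C ((k : ℝ) + 2) * zon a (k + 2) = C (2 * (k : ℝ) + d + 1) * (linF a * zon a (k + 1)) -
      C ((k : ℝ) + d - 1) * (sqN d * zon a k) := by
  have h : (k : ℝ) + 2 ≠ 0 := by positivity
  rw [zon, mul_sub, ← mul_assoc (C _) (C _), ← mul_assoc (C _) (C _), ← C_mul, ← C_mul,
    mul_div_cancel₀ _ h, mul_div_cancel₀ _ h]

lemma C_cancel {c : ℝ} (hc : c ≠ 0) {p q : MvPolynomial (Fin (d + 1)) ℝ}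
    (h : C c * p = C c * q) : p = q :=
  mul_left_cancel₀ (by simpa using hc) h

lemma dirD_zon (a : Euc d) (ha : ‖a‖ = 1) : ∀ k : ℕ,
    dirD a (zon a (k + 1)) = C ((k : ℝ) + d - 1) * zon a k
  | 0 => by
      have z1 : zon a (0 + 1) = C ((d : ℝ) - 1) * linF a := by simp [zon]
      rw [z1, dirD_C_mul, dirD_linF a ha]
      simp [zon]
  | 1 => by
      have h : (0 : ℝ) + 2 ≠ 0 := by norm_num
      apply C_cancel h
      have e := congrArg (dirD a) (zon_rec a 0)
      rw [dirD_C_mul, dirD_sub, dirD_C_mul, dirD_C_mul, dirD_mul, dirD_mul, dirD_linF a ha,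
        dirD_sqN, dirD_zon a ha 0] at e
      have z1 : zon a (0 + 1) = C ((d : ℝ) - 1) * linF a := by simp [zon]
      have z0 : zon a 0 = 1 := by simp [zon]
      have d0 : dirD a (1 : MvPolynomial (Fin (d + 1)) ℝ) = 0 := by simp [dirD]
      simp only [Nat.cast_zero] at e
      rw [show (1 + 1 : ℕ) = 0 + 2 by rfl, e, z1, z0, d0]
      simp only [map_add, map_sub, map_mul, map_natCast, map_ofNat, map_one, map_zero, Nat.cast_one]
      ring
  | k + 2 => by
      have h : (((k + 1 : ℕ) : ℝ)) + 2 ≠ 0 := by positivity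
      apply C_cancel h
      have e := congrArg (dirD a) (zon_rec a (k + 1))
      rw [dirD_C_mul, dirD_sub, dirD_C_mul, dirD_C_mul, dirD_mul, dirD_mul, dirD_linF a ha,
        dirD_sqN, dirD_zon a ha (k + 1), dirD_zon a ha k] at e
      have r := zon_rec a k
      rw [show (k + 2 + 1 : ℕ) = k + 1 + 2 by rfl, e]
      simp only [show k + 1 + 1 = k + 2 by rfl] at *
      simp only [map_add, map_sub, map_mul, map_natCast, map_ofNat, map_one, Nat.cast_add,
        Nat.cast_one, Nat.cast_ofNat] at *
      linear_combination (-((k : MvPolynomial (Fin (d + 1)) ℝ) + d)) * r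

lemma lap_sub (p q) : polyLaplacian d (p - q) = polyLaplacian d p - polyLaplacian d q := by
  simp [polyLaplacian, Finset.sum_sub_distrib]
lemma lap_C_mul (c : ℝ) (p) : polyLaplacian d (C c * p) = C c * polyLaplacian d p := by
  simp [polyLaplacian, Finset.mul_sum]
lemma lap_linF_mul (a : Euc d) (p) :
    polyLaplacian d (linF a * p) = linF a * polyLaplacian d p + C 2 * dirD a p := by
  simp only [polyLaplacian, dirD, Derivation.leibniz, smul_eq_mul, pderiv_linF, map_add, pderiv_C,
    Finset.mul_sum, ← Finset.sum_add_distrib, map_ofNat]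
  exact Finset.sum_congr rfl fun i _ => by ring
lemma lap_sqN_mul {k : ℕ} (p) (hp : p.IsHomogeneous k) :
    polyLaplacian d (sqN d * p) = sqN d * polyLaplacian d p +
      C (2 * ((d : ℝ) + 1) + 4 * k) * p := by
  have e := hp.sum_X_mul_pderiv
  have : polyLaplacian d (sqN d * p) = sqN d * polyLaplacian d p +
      C 4 * (∑ i, X i * pderiv i p) + ∑ i : Fin (d + 1), C 2 * p := by
    simp only [polyLaplacian, Derivation.leibniz, smul_eq_mul, pderiv_sqN, map_add,
      Finset.mul_sum, ← Finset.sum_add_distrib, pderiv_X_self, map_ofNat]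
    refine Finset.sum_congr rfl fun i _ => ?_
    have : pderiv i (2 : MvPolynomial (Fin (d + 1)) ℝ) = 0 := by
      rw [← map_ofNat C 2]; exact pderiv_C
    rw [this]
    ring
  rw [this, e]
  simp only [map_add, map_mul, map_natCast, map_ofNat, map_one, Finset.sum_const,
    Finset.card_univ, Fintype.card_fin, nsmul_eq_mul, Nat.cast_add, Nat.cast_one]
  ring

lemma zon_harm (a : Euc d) (ha : ‖a‖ = 1) : ∀ k, polyLaplacian d (zon a k) = 0
  | 0 => by simp [zon, polyLaplacian]
  | 1 => by
      rw [zon, lap_C_mul]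
      simp [polyLaplacian, pderiv_linF]
  | k + 2 => by
      have h : (k : ℝ) + 2 ≠ 0 := by positivity
      apply C_cancel h
      rw [← lap_C_mul, zon_rec, lap_sub, lap_C_mul, lap_C_mul, lap_linF_mul,
        lap_sqN_mul _ (zon_hom a k), zon_harm a ha (k + 1), zon_harm a ha k, dirD_zon a ha k]
      simp only [map_add, map_sub, map_mul, map_natCast, map_ofNat, map_one]
      ring

lemma eval_linF (a x : Euc d) : eval (fun i => x i) (linF a) = inner ℝ a x := by
  simp [linF, PiLp.inner_apply, mul_comm]

lemma eval_sqN (x : Euc d) : eval (fun i => x i) (sqN d) = ‖x‖ ^ 2 := by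
  simp [sqN, EuclideanSpace.real_norm_sq_eq]

lemma eval_zon (a x : Euc d) (hx : ‖x‖ = 1) : ∀ k,
    eval (fun i => x i) (zon a k) = (gegenbauer (((d : ℝ) - 1) / 2) k).eval (inner ℝ a x)
  | 0 => by simp [zon, gegenbauer]
  | 1 => by simp [zon, gegenbauer, eval_linF]; left; ring
  | k + 2 => by
      rw [zon, gegenbauer]
      simp only [map_sub, map_mul, eval_C, eval_linF, eval_sqN, hx, eval_zon a x hx k,
        eval_zon a x hx (k + 1), Polynomial.eval_sub, Polynomial.eval_mul, Polynomial.eval_C,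
        Polynomial.eval_X]
      ring

end algebra


section sphereInt
open MvPolynomial

variable {d : ℕ}

/-- evaluation of a polynomial at a vector -/
noncomputable abbrev ev (p : MvPolynomial (Fin (d + 1)) ℝ) (x : Euc d) : ℝ :=
  MvPolynomial.eval (fun i => x i) p

lemma ev_cont (p : MvPolynomial (Fin (d + 1)) ℝ) : Continuous (ev p) := by
  unfold ev
  apply (MvPolynomial.continuous_eval p).comp
  fun_prop

lemma ev_smul {p : MvPolynomial (Fin (d + 1)) ℝ} {k : ℕ} (hp : p.IsHomogeneous k) (r : ℝ)
    (x : Euc d) : ev p (r • x) = r ^ k * ev p x := by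
  unfold ev
  have h2 : (fun i => (r • x) i) = fun i => r * x i := by ext i; simp
  rw [h2, MvPolynomial.eval_eq, MvPolynomial.eval_eq, Finset.mul_sum]
  refine Finset.sum_congr rfl fun m hm => ?_
  have hdeg : ∑ i, m i = k := by
    have := hp (mem_support_iff.mp hm)
    rw [← this, Finsupp.weight_apply, Finsupp.sum_fintype] <;> simp
  have : ∏ i, (r * x i) ^ m i = r ^ k * ∏ i, x i ^ m i := by
    simp_rw [mul_pow]
    rw [Finset.prod_mul_distrib, Finset.prod_pow_eq_pow_sum, hdeg]
  rw [← Finset.prod_subset (Finset.subset_univ m.support), ← Finset.prod_subset (Finset.subset_univ m.support)] at this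
  · rw [this]; ring
  · intro i _ hi; simp at hi; simp [hi]
  · intro i _ hi; simp at hi; simp [hi]

lemma ev_lineDeriv (p : MvPolynomial (Fin (d + 1)) ℝ) (i : Fin (d + 1)) (x : Euc d) :
    HasLineDerivAt ℝ (ev p) (ev (pderiv i p) x) x (EuclideanSpace.single i 1) := by
  unfold HasLineDerivAt
  induction p using MvPolynomial.induction_on with
  | C a => simpa [ev] using hasDerivAt_const (0 : ℝ) a
  | add p q hp hq =>
      refine ((hp.add hq).congr_deriv (by simp [ev])).congr_of_eventuallyEq
        (Filter.Eventually.of_forall fun t => by simp [ev])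
  | mul_X p j hp =>
      have hX : HasDerivAt (fun t : ℝ => (x + t • EuclideanSpace.single i (1 : ℝ)) j)
          (ev (pderiv i (X j)) x) 0 := by
        by_cases h : j = i
        · subst h
          simpa [ev] using (hasDerivAt_id (0 : ℝ)).const_add (x j)
        · simpa [ev, h, pderiv_X_of_ne h] using hasDerivAt_const (0 : ℝ) (x j)
      have := hp.mul hX
      refine (this.congr_deriv ?_).congr_of_eventuallyEq (Filter.Eventually.of_forall fun t => ?_)
      · simp [ev, Derivation.leibniz]; ring
      · simp [ev]

lemma gauss_lineDeriv (i : Fin (d + 1)) (x : Euc d) :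
    HasLineDerivAt ℝ (fun y : Euc d => Real.exp (-‖y‖ ^ 2)) (-2 * x i * Real.exp (-‖x‖ ^ 2)) x
      (EuclideanSpace.single i 1) := by
  have h1 := ev_lineDeriv (sqN d) i x
  unfold HasLineDerivAt at *
  have h2 := h1.neg.exp
  refine (h2.congr_deriv ?_).congr_of_eventuallyEq (Filter.Eventually.of_forall fun t => ?_)
  · have := eval_sqN x
    simp [ev, pderiv_sqN, this]; ring
  · have := eval_sqN (x + t • EuclideanSpace.single i (1 : ℝ))
    simp only [Pi.neg_apply, ev]
    rw [this]

lemma radial_integrable (n k : ℕ) :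
    Integrable (fun r : Set.Ioi (0 : ℝ) => (r : ℝ) ^ k * Real.exp (-(r : ℝ) ^ 2))
      (Measure.volumeIoiPow n) := by
  rw [Measure.volumeIoiPow, integrable_withDensity_iff_integrable_smul']
  · have h := (integrable_rpow_mul_exp_neg_mul_sq (b := 1) one_pos (s := ((n + k : ℕ) : ℝ))
      (by have : (0 : ℝ) ≤ ((n + k : ℕ) : ℝ) := by positivity
          linarith)).integrableOn (s := Set.Ioi (0 : ℝ))
    rw [integrableOn_iff_comap_subtypeVal measurableSet_Ioi] at h
    refine h.congr (Filter.Eventually.of_forall fun r => ?_)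
    have hr : 0 < (r : ℝ) := r.2
    simp only [Function.comp, smul_eq_mul, Real.rpow_natCast]
    rw [ENNReal.toReal_ofReal (by positivity)]
    simp [pow_add]; ring
  · fun_prop
  · simp

lemma radial_val (n k : ℕ) :
    ∫ r : Set.Ioi (0 : ℝ), (r : ℝ) ^ k * Real.exp (-(r : ℝ) ^ 2) ∂(Measure.volumeIoiPow n) =
      1 / 2 * Real.Gamma (((n + k : ℕ) + 1 : ℝ) / 2) := by
  have h := integral_rpow_mul_exp_neg_rpow (p := 2) (q := ((n + k : ℕ) : ℝ)) (by norm_num)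
    (by have : (0 : ℝ) ≤ ((n + k : ℕ) : ℝ) := by positivity
        linarith)
  rw [← h]
  simp only [Measure.volumeIoiPow, ENNReal.ofReal]
  rw [integral_withDensity_eq_integral_smul,
    integral_subtype_comap measurableSet_Ioi fun a : ℝ ↦
      Real.toNNReal (a ^ n) • (a ^ k * Real.exp (-a ^ 2)),
    setIntegral_congr_fun measurableSet_Ioi fun x hx ↦ ?_]
  · have hx : 0 < x := hx
    rw [NNReal.smul_def, Real.coe_toNNReal _ (pow_nonneg hx.le _)]
    simp only [smul_eq_mul, Real.rpow_natCast, Real.rpow_ofNat]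
    rw [pow_add]; ring
  · exact (measurable_subtype_coe.pow_const _).real_toNNReal

/-- unnormalised surface measure -/
noncomputable abbrev sig (d : ℕ) : Measure (Sph d) := (volume : Measure (Euc d)).toSphere

lemma ev_polar {p : MvPolynomial (Fin (d + 1)) ℝ} {k : ℕ} (hp : p.IsHomogeneous k)
    (x : ({0}ᶜ : Set (Euc d))) :
    ev p x * Real.exp (-‖(x : Euc d)‖ ^ 2) =
      (fun z : Sph d × Set.Ioi (0 : ℝ) => ev p z.1 * ((z.2 : ℝ) ^ k * Real.exp (-(z.2 : ℝ) ^ 2)))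
        (homeomorphUnitSphereProd (Euc d) x) := by
  have hx : ‖(x : Euc d)‖ ≠ 0 := norm_ne_zero_iff.mpr x.2
  have : (x : Euc d) = ‖(x : Euc d)‖ • (‖(x : Euc d)‖⁻¹ • (x : Euc d)) := by
    rw [smul_smul, mul_inv_cancel₀ hx, one_smul]
  simp only [homeomorphUnitSphereProd_apply_fst_coe, homeomorphUnitSphereProd_apply_snd_coe]
  conv_lhs => rw [this, ev_smul hp, ← this]
  ring

lemma gauss_integrable {p : MvPolynomial (Fin (d + 1)) ℝ} {k : ℕ} (hp : p.IsHomogeneous k) :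
    Integrable (fun x : Euc d => ev p x * Real.exp (-‖x‖ ^ 2)) := by
  rw [← restrict_compl_singleton (μ := (volume : Measure (Euc d))) 0, ← IntegrableOn,
    integrableOn_iff_comap_subtypeVal (by measurability)]
  have e : ((fun x : Euc d => ev p x * Real.exp (-‖x‖ ^ 2)) ∘ (Subtype.val : ({0}ᶜ : Set (Euc d)) → _)) =
     (fun z : Sph d × Set.Ioi (0 : ℝ) => ev p z.1 * ((z.2 : ℝ) ^ k * Real.exp (-(z.2 : ℝ) ^ 2))) ∘
        (homeomorphUnitSphereProd (Euc d)) := by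
    ext x; exact ev_polar hp x
  rw [e, (volume : Measure (Euc d)).measurePreserving_homeomorphUnitSphereProd.integrable_comp_emb
    (Homeomorph.measurableEmbedding _)]
  refine Integrable.mul_prod (f := fun z : Sph d => ev p z)
    (g := fun r : Set.Ioi (0 : ℝ) => (r : ℝ) ^ k * Real.exp (-(r : ℝ) ^ 2)) ?_
    (radial_integrable _ k)
  exact ((ev_cont p).comp continuous_subtype_val).integrable_of_hasCompactSupport
    (HasCompactSupport.of_compactSpace _)

lemma gauss_polar {p : MvPolynomial (Fin (d + 1)) ℝ} {k : ℕ} (hp : p.IsHomogeneous k) :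
    ∫ x : Euc d, ev p x * Real.exp (-‖x‖ ^ 2) =
      (∫ y : Sph d, ev p y ∂(sig d)) * (1 / 2 * Real.Gamma (((d + k : ℕ) + 1 : ℝ) / 2)) := by
  rw [← radial_val d k]
  calc
    _ = ∫ x : ({(0)}ᶜ : Set (Euc d)), ev p x * Real.exp (-‖(x : Euc d)‖ ^ 2)
        ∂((volume : Measure (Euc d)).comap (↑)) := by
      rw [integral_subtype_comap (measurableSet_singleton _).compl
        (fun x : Euc d => ev p x * Real.exp (-‖x‖ ^ 2)), restrict_compl_singleton]
    _ = ∫ z : Sph d × Set.Ioi (0 : ℝ), ev p z.1 * ((z.2 : ℝ) ^ k * Real.exp (-(z.2 : ℝ) ^ 2))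
        ∂((sig d).prod (.volumeIoiPow (Module.finrank ℝ (Euc d) - 1))) := by
      rw [← (volume : Measure (Euc d)).measurePreserving_homeomorphUnitSphereProd.integral_comp
        (Homeomorph.measurableEmbedding _)]
      exact integral_congr_ae (Filter.Eventually.of_forall fun x => ev_polar hp x)
    _ = _ := by
      rw [integral_prod_mul (fun y : Sph d => ev p y)
        (fun r : Set.Ioi (0 : ℝ) => (r : ℝ) ^ k * Real.exp (-(r : ℝ) ^ 2))]
      simp

lemma sph_ibp_sig {p : MvPolynomial (Fin (d + 1)) ℝ} {m : ℕ} (hp : p.IsHomogeneous m)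
    (i : Fin (d + 1)) :
    ((m : ℝ) + d) * ∫ y : Sph d, ev (X i * p) y ∂(sig d) =
      ∫ y : Sph d, ev (pderiv i p) y ∂(sig d) := by
  have hX : (X i * p).IsHomogeneous (1 + m) := (isHomogeneous_X ℝ i).mul hp
  have hX2 : (C (-2) * (X i * p)).IsHomogeneous (1 + m) := C_mul_hom _ hX
  have hder : (pderiv i p).IsHomogeneous (m - 1) := hp.pderiv
  have key := integral_bilinear_hasLineDerivAt_right_eq_neg_left_of_integrable
    (μ := (volume : Measure (Euc d))) (B := ContinuousLinearMap.mul ℝ ℝ)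
    (f := ev p) (f' := ev (pderiv i p)) (g := fun y : Euc d => Real.exp (-‖y‖ ^ 2))
    (g' := fun x => -2 * x i * Real.exp (-‖x‖ ^ 2)) (v := EuclideanSpace.single i 1)
    (by simpa using gauss_integrable hder)
    (by
      refine (gauss_integrable hX2).congr (Filter.Eventually.of_forall fun x => ?_)
      simp [ev]; ring)
    (by simpa using gauss_integrable hp)
    (fun x _ => ev_lineDeriv p i x) (fun x _ => gauss_lineDeriv i x)
  have e1 : ∫ x : Euc d, (ContinuousLinearMap.mul ℝ ℝ) (ev p x) (-2 * x i * Real.exp (-‖x‖ ^ 2)) =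
      -2 * ∫ x : Euc d, ev (X i * p) x * Real.exp (-‖x‖ ^ 2) := by
    rw [← integral_const_mul]
    refine integral_congr_ae (Filter.Eventually.of_forall fun x => ?_)
    simp [ev]; ring
  rw [e1] at key
  simp only [ContinuousLinearMap.mul_apply'] at key
  rw [gauss_polar hX, gauss_polar hder] at key
  rcases Nat.eq_zero_or_pos m with rfl | hm
  · have hp0 : pderiv i p = 0 := by
      have h0 : p.totalDegree = 0 := Nat.le_zero.mp hp.totalDegree_le
      rw [totalDegree_eq_zero_iff_eq_C.mp h0]; simp
    have hG : 0 < Real.Gamma (((d + (1 + 0) : ℕ) + 1 : ℝ) / 2) := Real.Gamma_pos_of_pos (by positivity)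
    rw [hp0] at key ⊢
    simp only [ev, map_zero, integral_zero, zero_mul, neg_zero] at key ⊢
    have : ∫ y : Sph d, ev (X i * p) y ∂(sig d) = 0 := by
      rcases mul_eq_zero.mp key with h | h
      · norm_num at h
      · rcases mul_eq_zero.mp h with h | h
        · exact h
        · exfalso; linarith
    simp only [ev] at this
    rw [this, mul_zero]
  · obtain ⟨m, rfl⟩ : ∃ j, m = j + 1 := ⟨m - 1, by omega⟩
    have hs : (0 : ℝ) < ((d + (m + 1 - 1) : ℕ) + 1 : ℝ) / 2 := by positivity
    have hG := Real.Gamma_pos_of_pos hs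
    have e2 : ((d + (1 + (m + 1)) : ℕ) + 1 : ℝ) / 2 = ((d + (m + 1 - 1) : ℕ) + 1 : ℝ) / 2 + 1 := by
      rw [Nat.add_sub_cancel]; push_cast; ring
    rw [e2, Real.Gamma_add_one hs.ne'] at key
    have e3 : (((d + (m + 1 - 1) : ℕ) + 1 : ℝ) / 2) = (((m + 1 : ℕ) : ℝ) + d) / 2 := by
      rw [Nat.add_sub_cancel]; push_cast; ring
    generalize Real.Gamma (((d + (m + 1 - 1) : ℕ) + 1 : ℝ) / 2) = Γ at key hG
    rw [e3] at key
    apply mul_right_cancel₀ hG.ne'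
    linarith

lemma sig_univ_pos : (sig d) Set.univ ≠ 0 := by
  simp only [ne_eq, Measure.measure_univ_eq_zero]
  exact Measure.toSphere_ne_zero _

instance muSph_prob : IsProbabilityMeasure (muSph d) := by
  constructor
  unfold muSph
  rw [Measure.smul_apply, smul_eq_mul, ENNReal.inv_mul_cancel sig_univ_pos (measure_ne_top _ _)]

instance muSph_openPos : (muSph d).IsOpenPosMeasure := by
  unfold muSph
  exact Measure.isOpenPosMeasure_smul _ (ENNReal.inv_ne_zero.mpr (measure_ne_top _ _))

lemma int_mu (f : Sph d → ℝ) :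
    ∫ y, f y ∂(muSph d) = ((sig d) Set.univ)⁻¹.toReal * ∫ y, f y ∂(sig d) := by
  unfold muSph
  rw [integral_smul_measure, smul_eq_mul]

lemma sph_ibp {p : MvPolynomial (Fin (d + 1)) ℝ} {m : ℕ} (hp : p.IsHomogeneous m)
    (i : Fin (d + 1)) :
    ((m : ℝ) + d) * ∫ y : Sph d, ev (X i * p) y ∂(muSph d) =
      ∫ y : Sph d, ev (pderiv i p) y ∂(muSph d) := by
  rw [int_mu, int_mu, ← sph_ibp_sig hp i]; ring

lemma cont_int {f : Sph d → ℝ} (hf : Continuous f) : Integrable f (muSph d) :=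
  hf.integrable_of_hasCompactSupport (HasCompactSupport.of_compactSpace _)

lemma ev_int (p : MvPolynomial (Fin (d + 1)) ℝ) : Integrable (fun y : Sph d => ev p y) (muSph d) :=
  cont_int ((ev_cont p).comp continuous_subtype_val)

end sphereInt


section repro
open MvPolynomial

variable {d : ℕ}

/-- harmonic homogeneous -/
def HH (d k : ℕ) (p : MvPolynomial (Fin (d + 1)) ℝ) : Prop :=
  p.IsHomogeneous k ∧ polyLaplacian d p = 0

lemma hom_zero_eq_C {p : MvPolynomial (Fin (d + 1)) ℝ} (hp : p.IsHomogeneous 0) :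
    ∃ c, p = C c :=
  ⟨_, totalDegree_eq_zero_iff_eq_C.mp (Nat.le_zero.mp hp.totalDegree_le)⟩

lemma ev_mul (p q : MvPolynomial (Fin (d + 1)) ℝ) (x : Euc d) : ev (p * q) x = ev p x * ev q x := by
  simp [ev]

lemma green {k l : ℕ} {p q : MvPolynomial (Fin (d + 1)) ℝ} (hp : HH d k p) (hq : HH d l q) :
    ((k : ℝ) + l - 1 + d) * k * ∫ y : Sph d, ev (p * q) y ∂(muSph d) =
      ∫ y : Sph d, ev (∑ i, pderiv i p * pderiv i q) y ∂(muSph d) := by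
  rcases Nat.eq_zero_or_pos k with rfl | hk
  · obtain ⟨c, rfl⟩ := hom_zero_eq_C hp.1
    simp [ev]
  · obtain ⟨k, rfl⟩ : ∃ j, k = j + 1 := ⟨k - 1, by omega⟩
    have e := hp.1.sum_X_mul_pderiv
    have h1 : ∀ i, (((k + l : ℕ) : ℝ) + d) * ∫ y : Sph d, ev (X i * (pderiv i p * q)) y ∂(muSph d) =
        ∫ y : Sph d, ev (pderiv i (pderiv i p * q)) y ∂(muSph d) := fun i =>
      sph_ibp ((hp.1.pderiv (i := i)).mul hq.1) i
    have h2 := Finset.sum_congr (rfl : (Finset.univ : Finset (Fin (d + 1))) = _) (fun i _ => h1 i)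
    rw [← Finset.mul_sum, ← integral_finsetSum _ (fun i _ => ev_int _),
      ← integral_finsetSum _ (fun i _ => ev_int _)] at h2
    have e1 : ∀ y : Sph d, ∑ i, ev (X i * (pderiv i p * q)) y = ((k + 1 : ℕ) : ℝ) * ev (p * q) y := by
      intro y
      have := congrArg (fun r => ev (r * q) (y : Euc d)) e
      simp only [ev, map_mul, map_sum, nsmul_eq_mul, map_natCast] at this ⊢
      rw [← mul_assoc, ← this, Finset.sum_mul]
      exact Finset.sum_congr rfl fun i _ => by ring
    have e2 : ∀ y : Sph d, ∑ i, ev (pderiv i (pderiv i p * q)) y =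
        ev (∑ i, pderiv i p * pderiv i q) y := by
      intro y
      have := congrArg (fun r => ev (r * q) (y : Euc d)) hp.2
      simp only [ev, polyLaplacian, map_mul, map_sum, map_zero, zero_mul, Finset.sum_mul,
        Derivation.leibniz, map_add, smul_eq_mul, Finset.sum_add_distrib] at this ⊢
      have h3 : ∑ x, (eval fun i ↦ (y : Euc d) i) q * (eval fun i ↦ (y : Euc d) i) (pderiv x (pderiv x p)) = 0 := by
        rw [← this]
        exact Finset.sum_congr rfl fun i _ => by ring
      rw [h3, add_zero]
    simp only [e1, e2] at h2
    rw [integral_const_mul] at h2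
    rw [← h2]
    push_cast
    ring

lemma orth (hd : 1 ≤ d) {k l : ℕ} (hkl : k ≠ l) {p q : MvPolynomial (Fin (d + 1)) ℝ}
    (hp : HH d k p) (hq : HH d l q) : ∫ y : Sph d, ev (p * q) y ∂(muSph d) = 0 := by
  have h1 := green hp hq
  have h2 := green hq hp
  rw [mul_comm q p, Finset.sum_congr rfl (fun i _ => mul_comm (pderiv i q) (pderiv i p)), ← h1] at h2
  have h3 : ((k : ℝ) + l - 1 + d) * (k - l) * ∫ y : Sph d, ev (p * q) y ∂(muSph d) = 0 := by
    linarith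
  have hne : (k : ℝ) - l ≠ 0 := by
    rw [sub_ne_zero]; exact_mod_cast hkl
  have hpos : (k : ℝ) + l - 1 + d > 0 := by
    have : 1 ≤ k + l := by omega
    have h4 : (1 : ℝ) ≤ (k : ℝ) + l := by exact_mod_cast this
    have h5 : (1 : ℝ) ≤ d := by exact_mod_cast hd
    linarith
  rcases mul_eq_zero.mp h3 with h | h
  · exact absurd h (mul_ne_zero hpos.ne' hne)
  · exact h

lemma zon_HH (a : Euc d) (ha : ‖a‖ = 1) (k : ℕ) : HH d k (zon a k) := ⟨zon_hom a k, zon_harm a ha k⟩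

lemma pderiv_pderiv_comm' (i j : Fin (d + 1)) (p : MvPolynomial (Fin (d + 1)) ℝ) :
    pderiv i (pderiv j p) = pderiv j (pderiv i p) := by
  have h : ⁅(pderiv i : Derivation ℝ (MvPolynomial (Fin (d + 1)) ℝ) (MvPolynomial (Fin (d + 1)) ℝ)),
      (pderiv j : Derivation ℝ (MvPolynomial (Fin (d + 1)) ℝ) (MvPolynomial (Fin (d + 1)) ℝ))⁆ = 0 := by
    apply MvPolynomial.derivation_ext
    intro k
    simp [Derivation.commutator_apply, pderiv_X, Pi.single_apply, apply_ite]
  have := congrArg (fun D => D p) h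
  simpa [Derivation.commutator_apply, sub_eq_zero] using this

lemma dirD_HH (a : Euc d) {k : ℕ} {q : MvPolynomial (Fin (d + 1)) ℝ} (hq : HH d (k + 1) q) :
    HH d k (dirD a q) := by
  constructor
  · unfold dirD
    refine IsHomogeneous.sum _ _ _ fun i _ => C_mul_hom _ ?_
    exact hq.1.pderiv (i := i)
  · have h : polyLaplacian d (dirD a q) = dirD a (polyLaplacian d q) := by
      simp only [polyLaplacian, dirD, map_sum, pderiv_C_mul, Finset.mul_sum]
      rw [Finset.sum_comm]
      refine Finset.sum_congr rfl fun i _ => Finset.sum_congr rfl fun j _ => ?_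
      congr 1
      rw [pderiv_pderiv_comm' j i q, pderiv_pderiv_comm' j i]
    rw [h, hq.2]
    simp [dirD]

lemma ev_dirD_self (a : Euc d) {k : ℕ} {q : MvPolynomial (Fin (d + 1)) ℝ}
    (hq : q.IsHomogeneous k) : ev (dirD a q) a = k * ev q a := by
  have := congrArg (fun r => ev r a) hq.sum_X_mul_pderiv
  simpa [ev, dirD] using this

lemma ibp_dir (a : Euc d) {m : ℕ} {p : MvPolynomial (Fin (d + 1)) ℝ} (hp : p.IsHomogeneous m) :
    ((m : ℝ) + d) * ∫ y : Sph d, ev (linF a * p) y ∂(muSph d) =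
      ∫ y : Sph d, ev (dirD a p) y ∂(muSph d) := by
  have e1 : ∀ y : Sph d, ev (linF a * p) y = ∑ i, a i * ev (X i * p) y := by
    intro y
    simp only [ev, linF, map_mul, map_sum, eval_C, Finset.sum_mul]
    exact Finset.sum_congr rfl fun i _ => by ring
  have e2 : ∀ y : Sph d, ev (dirD a p) y = ∑ i, a i * ev (pderiv i p) y := by
    intro y
    simp [ev, dirD]
  simp only [e1, e2]
  rw [integral_finsetSum _ (fun i _ => (ev_int _).const_mul _),
    integral_finsetSum _ (fun i _ => (ev_int _).const_mul _), Finset.mul_sum]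
  refine Finset.sum_congr rfl fun i _ => ?_
  rw [integral_const_mul, integral_const_mul, ← sph_ibp hp i]
  ring

lemma int_congr_ev {p q : MvPolynomial (Fin (d + 1)) ℝ} (h : ∀ y : Sph d, ev p y = ev q y) :
    ∫ y : Sph d, ev p y ∂(muSph d) = ∫ y : Sph d, ev q y ∂(muSph d) := by
  simp only [h]

lemma int_ev_add (p q : MvPolynomial (Fin (d + 1)) ℝ) :
    ∫ y : Sph d, ev (p + q) y ∂(muSph d) =
      ∫ y : Sph d, ev p y ∂(muSph d) + ∫ y : Sph d, ev q y ∂(muSph d) := by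
  rw [← integral_add (ev_int _) (ev_int _)]; simp [ev]
lemma int_ev_sub (p q : MvPolynomial (Fin (d + 1)) ℝ) :
    ∫ y : Sph d, ev (p - q) y ∂(muSph d) =
      ∫ y : Sph d, ev p y ∂(muSph d) - ∫ y : Sph d, ev q y ∂(muSph d) := by
  rw [← integral_sub (ev_int _) (ev_int _)]; simp [ev]
lemma int_ev_C_mul (c : ℝ) (p : MvPolynomial (Fin (d + 1)) ℝ) :
    ∫ y : Sph d, ev (C c * p) y ∂(muSph d) = c * ∫ y : Sph d, ev p y ∂(muSph d) := by
  rw [← integral_const_mul]; simp [ev]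

lemma repro (hd : 1 ≤ d) (a : Euc d) (ha : ‖a‖ = 1) : ∀ (k : ℕ) (q : MvPolynomial (Fin (d + 1)) ℝ),
    HH d k q → (2 * (k : ℝ) + d - 1) * ∫ y : Sph d, ev (zon a k * q) y ∂(muSph d) =
      ((d : ℝ) - 1) * ev q a
  | 0, q, hq => by
      obtain ⟨c, rfl⟩ := hom_zero_eq_C hq.1
      simp [zon, ev]
  | 1, q, hq => by
      have h1 := ibp_dir a hq.1
      obtain ⟨c, hc⟩ := hom_zero_eq_C (dirD_HH a (k := 0) hq).1
      have h2 := ev_dirD_self a hq.1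
      rw [hc] at h1 h2
      have h3 : ∫ y : Sph d, ev (C c : MvPolynomial (Fin (d + 1)) ℝ) (y : Euc d) ∂(muSph d) = c := by simp [ev]
      rw [h3] at h1
      have h4 : c = ev q a := by simpa [ev] using h2
      rw [zon, mul_assoc, int_ev_C_mul, ← h4, ← h1]
      push_cast; ring
  | k + 2, q, hq => by
      have hP := ibp_dir a ((zon_hom a (k + 1)).mul hq.1)
      rw [dirD_mul, int_ev_add, dirD_zon a ha, mul_assoc, int_ev_C_mul,
        orth hd (by omega : k ≠ k + 2) (zon_HH a ha k) hq, mul_zero, zero_add] at hP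
      have ih := repro hd a ha (k + 1) _ (dirD_HH a (k := k + 1) hq)
      rw [ev_dirD_self a hq.1] at ih
      have hz : C ((k : ℝ) + 2) * (zon a (k + 2) * q) =
          C (2 * (k : ℝ) + d + 1) * (linF a * (zon a (k + 1) * q)) -
            C ((k : ℝ) + d - 1) * (sqN d * (zon a k * q)) := by
        rw [← mul_assoc, zon_rec]; ring
      have hs : ∫ y : Sph d, ev (sqN d * (zon a k * q)) y ∂(muSph d) = 0 := by
        rw [← orth hd (by omega : k ≠ k + 2) (zon_HH a ha k) hq]
        apply int_congr_ev
        intro y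
        have h1 : ‖(y : Euc d)‖ = 1 := by simp
        have := eval_sqN (y : Euc d)
        rw [ev_mul]
        simp only [ev] at *
        rw [this, h1]; simp
      have h5 := congrArg (fun r => ∫ y : Sph d, ev r y ∂(muSph d)) hz
      simp only [int_ev_C_mul, int_ev_sub, hs] at h5
      have h6 : ((k : ℝ) + 2) ≠ 0 := by positivity
      apply mul_left_cancel₀ h6
      push_cast at *
      linear_combination (2 * ((k : ℝ) + 2) + d - 1) * h5 + (2 * (k : ℝ) + d + 1) * hP + ih

lemma geg_one (hd : 1 ≤ d) : ∀ k : ℕ, ((k : ℝ) + d - 1) * (gegenbauer (((d : ℝ) - 1) / 2) k).eval 1 =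
    ((d : ℝ) - 1) * (Nat.choose (d + k - 1) k : ℝ) := by
  obtain ⟨e, rfl⟩ : ∃ e, d = e + 1 := ⟨d - 1, by omega⟩
  have hb : ∀ k : ℕ, ((k : ℝ) + 1) * (Nat.choose (e + 1 + (k + 1) - 1) (k + 1) : ℝ) =
      ((e : ℝ) + 1 + k) * (Nat.choose (e + 1 + k - 1) k : ℝ) := by
    intro k
    have := Nat.add_one_mul_choose_eq (e + k) k
    have h2 : e + 1 + (k + 1) - 1 = e + k + 1 := by omega
    have h3 : e + 1 + k - 1 = e + k := by omega
    rw [h2, h3]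
    have h4 : ((e + k + 1 : ℕ) : ℝ) * ((e + k).choose k : ℝ) = ((e + k + 1).choose (k + 1) : ℝ) * ((k + 1 : ℕ) : ℝ) := by
      exact_mod_cast this
    push_cast at h4
    linarith
  intro k
  induction k using Nat.strong_induction_on with
  | _ k ih =>
    match k, ih with
    | 0, _ => simp [gegenbauer]
    | 1, _ => simp [gegenbauer]; ring
    | k + 2, ih =>
      have i0 := ih k (by omega)
      have i1 := ih (k + 1) (by omega)
      have b0 := hb k
      have b1 := hb (k + 1)
      rw [gegenbauer]
      simp only [Polynomial.eval_sub, Polynomial.eval_mul, Polynomial.eval_C, Polynomial.eval_X]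
      generalize (Polynomial.eval 1 (gegenbauer (((e + 1 : ℕ) - 1 : ℝ) / 2) k)) = g0 at *
      generalize (Polynomial.eval 1 (gegenbauer (((e + 1 : ℕ) - 1 : ℝ) / 2) (k + 1))) = g1 at *
      rw [show k + 1 + 1 = k + 2 by rfl] at *
      generalize ((e + 1 + k - 1).choose k : ℝ) = c0 at *
      generalize ((e + 1 + (k + 1) - 1).choose (k + 1) : ℝ) = c1 at *
      generalize ((e + 1 + (k + 2) - 1).choose (k + 2) : ℝ) = c2 at *
      push_cast at *
      have h6 : ((k : ℝ) + 2) ≠ 0 := by positivity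
      have h7 : ((k : ℝ) + 1 + e) ≠ 0 := by positivity
      field_simp
      apply mul_left_cancel₀ h7
      simp only [add_sub_cancel_right] at *
      have i0' : ((k : ℝ) + e) * g0 = e * c0 := by linarith
      have i1' : ((k : ℝ) + 1 + e) * g1 = e * c1 := by linarith
      have b1' : ((k : ℝ) + 2) * c2 = ((e : ℝ) + 2 + k) * c1 := by linarith
      linear_combination (2 * (k : ℝ) + e + 2) * ((k : ℝ) + 2 + e) * i1' -
        ((k : ℝ) + 1 + e) * ((k : ℝ) + 2 + e) * i0' + e * ((k : ℝ) + 2 + e) * b0 - e * ((k : ℝ) + 1 + e) * b1'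

noncomputable def Ak (d k : ℕ) : ℝ := dimHarm d k /
        (((k : ℝ) * ((k : ℝ) + d - 1)) * (gegenbauer (((d : ℝ) - 1) / 2) k).eval 1)

lemma Ak_eq (hd : 1 ≤ d) {k : ℕ} (hk : 1 ≤ k) :
    Ak d k = (2 * (k : ℝ) + d - 1) / (((d : ℝ) - 1) * (k * ((k : ℝ) + d - 1))) := by
  have h := geg_one hd k
  have hk' : (1 : ℝ) ≤ k := by exact_mod_cast hk
  have hd' : (1 : ℝ) ≤ d := by exact_mod_cast hd
  have h1 : (k : ℝ) + d - 1 ≠ 0 := by linarith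
  have hb : (Nat.choose (d + k - 1) k : ℝ) ≠ 0 := by
    have : 0 < Nat.choose (d + k - 1) k := Nat.choose_pos (by omega)
    positivity
  have hg : (gegenbauer (((d : ℝ) - 1) / 2) k).eval 1 =
    ((d : ℝ) - 1) * (Nat.choose (d + k - 1) k : ℝ) / ((k : ℝ) + d - 1) := by
    field_simp; linarith
  unfold Ak dimHarm
  rw [hg]
  rcases eq_or_ne ((d : ℝ) - 1) 0 with h0 | h0
  · rw [h0]; simp
  · have : (k : ℝ) ≠ 0 := by linarith
    field_simp

lemma Ak_nonneg (hd : 1 ≤ d) {k : ℕ} (hk : 1 ≤ k) : 0 ≤ Ak d k := by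
  rw [Ak_eq hd hk]
  have hk' : (1 : ℝ) ≤ k := by exact_mod_cast hk
  have hd' : (1 : ℝ) ≤ d := by exact_mod_cast hd
  apply div_nonneg (by linarith)
  exact mul_nonneg (by linarith) (mul_nonneg (by linarith) (by linarith))

lemma gw_eval (n : ℕ) (t : ℝ) : (gw d n).eval t =
    ∑ k ∈ Finset.Icc 1 n, Ak d k * (gegenbauer (((d : ℝ) - 1) / 2) k).eval t := by
  simp [gw, Polynomial.eval_finsetSum, Ak]

lemma harm_iff (k : ℕ) (f : SphFun d) : f ∈ sphHarmonic d k ↔ ∃ p, HH d k p ∧ ∀ x : Sph d, f x = ev p x := by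
  simp [sphHarmonic, HH, ev, and_assoc]

lemma HH_sub {k : ℕ} {p q : MvPolynomial (Fin (d + 1)) ℝ} (hp : HH d k p) (hq : HH d k q) :
    HH d k (p - q) := ⟨hp.1.sub hq.1, by rw [lap_sub, hp.2, hq.2, sub_zero]⟩

lemma HH_sum {ι : Type*} (s : Finset ι) {k : ℕ} (p : ι → MvPolynomial (Fin (d + 1)) ℝ)
    (hp : ∀ i ∈ s, HH d k (p i)) : HH d k (∑ i ∈ s, p i) := by
  refine ⟨IsHomogeneous.sum _ _ _ fun i hi => (hp i hi).1, ?_⟩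
  have : polyLaplacian d (∑ i ∈ s, p i) = ∑ i ∈ s, polyLaplacian d (p i) := by
    simp only [polyLaplacian, map_sum]
    rw [Finset.sum_comm]
  rw [this]
  exact Finset.sum_eq_zero fun i hi => (hp i hi).2

lemma HH_C_mul {k : ℕ} {p : MvPolynomial (Fin (d + 1)) ℝ} (c : ℝ) (hp : HH d k p) :
    HH d k (C c * p) := ⟨C_mul_hom c hp.1, by rw [lap_C_mul, hp.2, mul_zero]⟩

lemma harm_unique (hd : 1 ≤ d) (n : ℕ) (p q : ℕ → MvPolynomial (Fin (d + 1)) ℝ)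
    (hp : ∀ k, HH d k (p k)) (hq : ∀ k, HH d k (q k))
    (h : ∀ y : Sph d, ∑ j ∈ Finset.Icc 1 n, ev (p j) y = ∑ j ∈ Finset.Icc 1 n, ev (q j) y)
    (k : ℕ) (hk : k ∈ Finset.Icc 1 n) (y : Sph d) : ev (p k) y = ev (q k) y := by
  have h0 : ∀ y : Sph d, ∑ j ∈ Finset.Icc 1 n, ev (p j - q j) y = 0 := by
    intro y
    have := h y
    simp only [ev, map_sub, Finset.sum_sub_distrib] at *
    linarith
  have h1 : ∫ y : Sph d, ∑ j ∈ Finset.Icc 1 n, ev ((p k - q k) * (p j - q j)) y ∂(muSph d) = 0 := by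
    have : ∀ y : Sph d, ∑ j ∈ Finset.Icc 1 n, ev ((p k - q k) * (p j - q j)) y = 0 := by
      intro y
      simp only [ev_mul]
      rw [← Finset.mul_sum, h0, mul_zero]
    simp only [this]; simp
  rw [integral_finsetSum _ (fun i _ => ev_int _), Finset.sum_eq_single k] at h1
  · have hc : Continuous (fun y : Sph d => ev ((p k - q k) * (p k - q k)) y) :=
      (ev_cont _).comp continuous_subtype_val
    have hnn : 0 ≤ fun y : Sph d => ev ((p k - q k) * (p k - q k)) y := by
      intro y; simp only [ev_mul]; exact mul_self_nonneg _
    rw [integral_eq_zero_iff_of_nonneg hnn (ev_int _)] at h1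
    have h2 := hc.ae_eq_iff_eq (muSph d) continuous_const |>.mp h1
    have h3 := congrFun h2 y
    simp only [ev_mul] at h3
    have h4 := mul_self_eq_zero.mp h3
    simp only [ev, map_sub] at *
    linarith
  · intro j _ hj
    exact orth hd (Ne.symm hj) (HH_sub (hp k) (hq k)) (HH_sub (hp j) (hq j))
  · intro h; exact absurd hk h

lemma normW_sq (hd : 1 ≤ d) (n N : ℕ) (x : Fin N → Sph d) :
    innerW d n ((N : ℝ)⁻¹ • ∑ i, GxFun d n (x i : Euc d)) ((N : ℝ)⁻¹ • ∑ i, GxFun d n (x i : Euc d)) =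
      (N : ℝ)⁻¹ * (N : ℝ)⁻¹ * ∑ i, ∑ j, (gw d n).eval ⟪(x i : Euc d), (x j : Euc d)⟫ := by
  set P := (N : ℝ)⁻¹ • ∑ i, GxFun d n (x i : Euc d) with hP
  let p : ℕ → MvPolynomial (Fin (d + 1)) ℝ := fun k => C ((N : ℝ)⁻¹ * Ak d k) * ∑ i, zon (x i : Euc d) k
  have hx : ∀ i, ‖(x i : Euc d)‖ = 1 := fun i => by simp
  have hpH : ∀ k, HH d k (p k) := fun k => HH_C_mul _ (HH_sum _ _ fun i _ => zon_HH _ (hx i) k)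
  have hpe : ∀ k (y : Sph d), ev (p k) y = (N : ℝ)⁻¹ * Ak d k *
      ∑ i, (gegenbauer (((d : ℝ) - 1) / 2) k).eval ⟪(x i : Euc d), (y : Euc d)⟫ := by
    intro k y
    have hy : ‖(y : Euc d)‖ = 1 := by simp
    simp only [ev, p, map_mul, eval_C, map_sum, eval_zon _ _ hy]
  have hPe : ∀ y : Sph d, P y = ∑ k ∈ Finset.Icc 1 n, ev (p k) y := by
    intro y
    simp only [hP, Pi.smul_apply, Finset.sum_apply, GxFun, gw_eval, smul_eq_mul, hpe]
    rw [Finset.sum_comm, Finset.mul_sum]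
    refine Finset.sum_congr rfl fun k _ => ?_
    rw [← Finset.mul_sum]; ring
  have hex : ∃ c : ℕ → SphFun d, (∀ j, c j ∈ sphHarmonic d j) ∧ P = ∑ j ∈ Finset.Icc 1 n, c j := by
    refine ⟨fun k y => ev (p k) y, fun j => (harm_iff j _).mpr ⟨p j, hpH j, fun _ => rfl⟩, ?_⟩
    ext y
    rw [hPe, Finset.sum_apply]
  have hcomp : ∀ k ∈ Finset.Icc 1 n, ∀ y, harmComponent d n P k y = ev (p k) y := by
    intro k hk y
    unfold harmComponent
    rw [dif_pos hex]
    have hs := hex.choose_spec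
    set c := hex.choose
    choose q hq using fun j => (harm_iff j _).mp (hs.1 j)
    rw [(hq k).2 y]
    refine harm_unique hd n q p (fun k => (hq k).1) hpH (fun z => ?_) k hk y
    rw [← hPe z]
    have := congrFun hs.2 z
    rw [this, Finset.sum_apply]
    exact Finset.sum_congr rfl fun j _ => ((hq j).2 z).symm
  have hIntg : ∀ k ∈ Finset.Icc 1 n, ((k : ℝ) * ((k : ℝ) + d - 1)) *
      ∫ y, harmComponent d n P k y * harmComponent d n P k y ∂muSph d =
      (N : ℝ)⁻¹ * (N : ℝ)⁻¹ * ∑ i, ∑ j, Ak d k *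
        (gegenbauer (((d : ℝ) - 1) / 2) k).eval ⟪(x i : Euc d), (x j : Euc d)⟫ := by
    intro k hk
    have hk1 : 1 ≤ k := (Finset.mem_Icc.mp hk).1
    simp only [hcomp k hk]
    simp only [← ev_mul]
    have e1 : ∀ y : Sph d, ev (p k * p k) y = ((N : ℝ)⁻¹ * Ak d k) ^ 2 * ∑ i, ∑ j,
        ev (zon (x i : Euc d) k * zon (x j : Euc d) k) y := by
      intro y
      simp only [ev, p, map_mul, map_sum, eval_C]
      rw [← Finset.sum_mul_sum]; ring
    simp only [e1]
    rw [integral_const_mul, integral_finsetSum _ (fun i _ => integrable_finsetSum _ fun j _ => ev_int _)]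
    have e2 : ∀ i j, ∫ y : Sph d, ev (zon (x i : Euc d) k * zon (x j : Euc d) k) y ∂(muSph d) =
        ((d : ℝ) - 1) / (2 * (k : ℝ) + d - 1) *
          (gegenbauer (((d : ℝ) - 1) / 2) k).eval ⟪(x i : Euc d), (x j : Euc d)⟫ := by
      intro i j
      have h := repro hd (x i : Euc d) (hx i) k _ (zon_HH (x j : Euc d) (hx j) k)
      have h2 : ev (zon (x j : Euc d) k) (x i : Euc d) = _ := eval_zon _ _ (hx i) k
      rw [h2, real_inner_comm] at h
      have hk' : (1 : ℝ) ≤ k := by exact_mod_cast hk1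
      have hd' : (1 : ℝ) ≤ d := by exact_mod_cast hd
      have : (2 * (k : ℝ) + d - 1) ≠ 0 := by linarith
      field_simp
      linarith
    have e3 : ((k : ℝ) * ((k : ℝ) + d - 1)) * (Ak d k ^ 2 * (((d : ℝ) - 1) / (2 * (k : ℝ) + d - 1))) = Ak d k := by
      rw [Ak_eq hd hk1]
      have hk' : (1 : ℝ) ≤ k := by exact_mod_cast hk1
      have hd' : (1 : ℝ) ≤ d := by exact_mod_cast hd
      have h1 : (2 * (k : ℝ) + d - 1) ≠ 0 := by linarith
      have h2 : ((k : ℝ) + d - 1) ≠ 0 := by linarith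
      have h3 : (k : ℝ) ≠ 0 := by linarith
      rcases eq_or_ne ((d : ℝ) - 1) 0 with h0 | h0
      · rw [h0]; simp
      · field_simp
    have e4 : ∀ i, ∫ y : Sph d, ∑ j, ev (zon (x i : Euc d) k * zon (x j : Euc d) k) y ∂(muSph d) =
        ∑ j, ((d : ℝ) - 1) / (2 * (k : ℝ) + d - 1) *
          (gegenbauer (((d : ℝ) - 1) / 2) k).eval ⟪(x i : Euc d), (x j : Euc d)⟫ := by
      intro i
      rw [integral_finsetSum _ (fun j _ => ev_int _)]
      exact Finset.sum_congr rfl fun j _ => e2 i j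
    simp only [e4, ← Finset.mul_sum]
    conv_rhs => rw [← e3]
    ring
  unfold innerW
  rw [Finset.sum_congr rfl hIntg, ← Finset.mul_sum]
  congr 1
  simp only [gw_eval]
  rw [Finset.sum_comm]
  refine Finset.sum_congr rfl fun i _ => ?_
  rw [Finset.sum_comm]

end repro


section gegen

lemma unit_pair {d : ℕ} (hd : 1 ≤ d) (t : ℝ) (ht : t ∈ Set.Icc (-1 : ℝ) 1) :
    ∃ a b : Sph d, inner ℝ (a : Euc d) (b : Euc d) = t := by
  have h01 : (0 : Fin (d + 1)) ≠ ⟨1, by omega⟩ := by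
    intro h; have := congrArg Fin.val h; simp at this
  have hs : 0 ≤ 1 - t ^ 2 := by nlinarith [ht.1, ht.2]
  refine ⟨⟨EuclideanSpace.single 0 1, by simp⟩,
    ⟨t • EuclideanSpace.single 0 1 + Real.sqrt (1 - t ^ 2) • EuclideanSpace.single ⟨1, by omega⟩ 1, ?_⟩, ?_⟩
  · rw [mem_sphere_zero_iff_norm]
    have : ‖t • EuclideanSpace.single (0 : Fin (d + 1)) (1 : ℝ) + Real.sqrt (1 - t ^ 2) • EuclideanSpace.single (⟨1, by omega⟩ : Fin (d + 1)) (1 : ℝ)‖ ^ 2 = 1 := by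
      rw [norm_add_sq_real]
      simp only [norm_smul, inner_smul_left, inner_smul_right, PiLp.norm_single,
        EuclideanSpace.inner_single_left]
      simp [h01, Real.sq_sqrt hs]
    exact (pow_eq_one_iff_of_nonneg (norm_nonneg _) two_ne_zero).mp this
  · simp only [inner_add_right, inner_smul_right, EuclideanSpace.inner_single_left]
    simp [h01]

lemma geg_abs {d : ℕ} (hd : 2 ≤ d) (k : ℕ) (t : ℝ) (ht : t ∈ Set.Icc (-1 : ℝ) 1) :
    |(gegenbauer (((d : ℝ) - 1) / 2) k).eval t| ≤ (gegenbauer (((d : ℝ) - 1) / 2) k).eval 1 := by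
  obtain ⟨a, b, hab⟩ := unit_pair (by omega : 1 ≤ d) t ht
  have ha : ‖(a : Euc d)‖ = 1 := by simp
  have hb : ‖(b : Euc d)‖ = 1 := by simp
  have hd1 : 1 ≤ d := by omega
  have haa := repro hd1 a ha k _ (zon_HH (a : Euc d) ha k)
  have hba := repro hd1 a ha k _ (zon_HH (b : Euc d) hb k)
  have hbb := repro hd1 b hb k _ (zon_HH (b : Euc d) hb k)
  simp only [ev] at haa hba hbb
  rw [eval_zon _ _ ha] at haa hba
  rw [eval_zon _ _ hb] at hbb
  rw [real_inner_self_eq_norm_sq, ha, one_pow] at haa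
  rw [real_inner_self_eq_norm_sq, hb, one_pow] at hbb
  rw [real_inner_comm, hab] at hba
  set I1 := ∫ y : Sph d, MvPolynomial.eval (fun i => (y : Euc d) i) (zon (a : Euc d) k * zon (a : Euc d) k) ∂(muSph d)
  set I2 := ∫ y : Sph d, MvPolynomial.eval (fun i => (y : Euc d) i) (zon (a : Euc d) k * zon (b : Euc d) k) ∂(muSph d)
  set I3 := ∫ y : Sph d, MvPolynomial.eval (fun i => (y : Euc d) i) (zon (b : Euc d) k * zon (b : Euc d) k) ∂(muSph d)
  have hsq : ∀ s : ℝ, 0 ≤ I1 + 2 * s * I2 + s ^ 2 * I3 := by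
    intro s
    have h : ∫ y : Sph d, (ev (zon (a : Euc d) k * zon (a : Euc d) k) y + 2 * s * ev (zon (a : Euc d) k * zon (b : Euc d) k) y +
        s ^ 2 * ev (zon (b : Euc d) k * zon (b : Euc d) k) y) ∂(muSph d) = I1 + 2 * s * I2 + s ^ 2 * I3 := by
      have i1 : Integrable (fun y : Sph d => ev (zon (a : Euc d) k * zon (a : Euc d) k) y +
          2 * s * ev (zon (a : Euc d) k * zon (b : Euc d) k) y) (muSph d) :=
        (ev_int _).add ((ev_int _).const_mul _)
      rw [integral_add i1 ((ev_int _).const_mul _),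
        integral_add (ev_int _) ((ev_int _).const_mul _), integral_const_mul, integral_const_mul]
    rw [← h]
    apply integral_nonneg
    intro y
    simp only [ev_mul, Pi.zero_apply]
    nlinarith [sq_nonneg (ev (zon (a : Euc d) k) y + s * ev (zon (b : Euc d) k) y)]
  have hd' : (2 : ℝ) ≤ d := by exact_mod_cast hd
  have hl : 0 < 2 * (k : ℝ) + d - 1 := by have : (0 : ℝ) ≤ k := by positivity
                                          linarith
  have h1 := mul_nonneg hl.le (hsq 1)
  have h2 := mul_nonneg hl.le (hsq (-1))
  have hdp : 0 < (d : ℝ) - 1 := by linarith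
  rw [abs_le]
  constructor
  · have : 0 ≤ ((d : ℝ) - 1) * (2 * (gegenbauer (((d : ℝ) - 1) / 2) k).eval 1 + 2 * (gegenbauer (((d : ℝ) - 1) / 2) k).eval t) := by
      nlinarith
    have := nonneg_of_mul_nonneg_right this hdp
    linarith
  · have : 0 ≤ ((d : ℝ) - 1) * (2 * (gegenbauer (((d : ℝ) - 1) / 2) k).eval 1 - 2 * (gegenbauer (((d : ℝ) - 1) / 2) k).eval t) := by
      nlinarith
    have := nonneg_of_mul_nonneg_right this hdp
    linarith

lemma geg_rec (α : ℝ) (k : ℕ) (t : ℝ) : ((k : ℝ) + 2) * (gegenbauer α (k + 2)).eval t =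
    2 * ((k : ℝ) + 1 + α) * t * (gegenbauer α (k + 1)).eval t - ((k : ℝ) + 2 * α) * (gegenbauer α k).eval t := by
  rw [gegenbauer]
  simp only [Polynomial.eval_sub, Polynomial.eval_mul, Polynomial.eval_C, Polynomial.eval_X]
  have : (k : ℝ) + 2 ≠ 0 := by positivity
  field_simp

lemma geg_rec_deriv (α : ℝ) (k : ℕ) (t : ℝ) : ((k : ℝ) + 2) * (gegenbauer α (k + 2)).derivative.eval t =
    2 * ((k : ℝ) + 1 + α) * ((gegenbauer α (k + 1)).eval t + t * (gegenbauer α (k + 1)).derivative.eval t)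
      - ((k : ℝ) + 2 * α) * (gegenbauer α k).derivative.eval t := by
  rw [gegenbauer]
  simp only [Polynomial.eval_sub, Polynomial.eval_mul, Polynomial.eval_C, Polynomial.eval_X,
    Polynomial.derivative_sub, Polynomial.derivative_mul, Polynomial.derivative_C, Polynomial.derivative_X,
    Polynomial.eval_add, Polynomial.eval_zero, Polynomial.eval_one]
  have : (k : ℝ) + 2 ≠ 0 := by positivity
  field_simp
  ring

lemma geg_ii {α : ℝ} (hα : 0 ≤ α) (t : ℝ) : ∀ k : ℕ,
    ((k : ℝ) + 2 + α) * (gegenbauer α (k + 2)).eval t =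
      α * ((gegenbauer (α + 1) (k + 2)).eval t - (gegenbauer (α + 1) k).eval t) := by
  intro k
  induction k using Nat.strong_induction_on with
  | _ k ih =>
    match k, ih with
    | 0, _ =>
      have a := geg_rec α 0 t
      have b := geg_rec (α + 1) 0 t
      simp only [gegenbauer, Polynomial.eval_mul, Polynomial.eval_C, Polynomial.eval_X,
        Polynomial.eval_one, Polynomial.eval_sub] at a b ⊢
      push_cast at *
      ring
    | 1, _ =>
      simp only [gegenbauer, Polynomial.eval_mul, Polynomial.eval_C, Polynomial.eval_X,
        Polynomial.eval_one, Polynomial.eval_sub]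
      push_cast
      ring
    | k + 2, ih =>
      have i0 := ih k (by omega)
      have i1 := ih (k + 1) (by omega)
      have r1 := geg_rec α (k + 2) t
      have r2 := geg_rec (α + 1) (k + 2) t
      have r3 := geg_rec (α + 1) k t
      rw [show k + 1 + 2 = k + 2 + 1 by rfl] at i1
      push_cast at *
      have hk : (0 : ℝ) < (k : ℝ) + 2 + α := by positivity
      have hk4 : (0 : ℝ) < (k : ℝ) + 4 := by positivity
      generalize (gegenbauer α (k + 2)).eval t = g2 at *
      generalize (gegenbauer α (k + 2 + 1)).eval t = g3 at *
      generalize (gegenbauer α (k + 2 + 2)).eval t = g4 at *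
      generalize (gegenbauer (α + 1) k).eval t = h0 at *
      generalize (gegenbauer (α + 1) (k + 1)).eval t = h1 at *
      generalize (gegenbauer (α + 1) (k + 2)).eval t = h2 at *
      generalize (gegenbauer (α + 1) (k + 2 + 1)).eval t = h3 at *
      generalize (gegenbauer (α + 1) (k + 2 + 2)).eval t = h4 at *
      apply mul_left_cancel₀ (mul_pos hk hk4).ne'
      linear_combination ((k : ℝ) + 2 + α) * (k + 4 + α) * r1 + 2 * t * ((k : ℝ) + 2 + α) * (k + 4 + α) * i1
        - (k + 2 + 2 * α) * (k + 4 + α) * i0 - α * ((k : ℝ) + 2 + α) * r2 + α * (k + 4 + α) * r3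

lemma geg_deriv {α : ℝ} (hα : 0 ≤ α) (t : ℝ) : ∀ k : ℕ,
    (gegenbauer α (k + 1)).derivative.eval t = 2 * α * (gegenbauer (α + 1) k).eval t := by
  intro k
  induction k using Nat.strong_induction_on with
  | _ k ih =>
    match k, ih with
    | 0, _ => simp [gegenbauer]
    | 1, _ =>
      have a := geg_rec_deriv α 0 t
      simp [gegenbauer] at a ⊢
      linarith
    | k + 2, ih =>
      have i0 := ih k (by omega)
      have i1 := ih (k + 1) (by omega)
      have r1 := geg_rec_deriv α (k + 1) t
      have r2 := geg_ii hα t k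
      have r3 := geg_rec (α + 1) k t
      rw [show k + 1 + 2 = k + 2 + 1 by rfl, show k + 1 + 1 = k + 2 by rfl] at *
      push_cast at *
      have hk : (0 : ℝ) < (k : ℝ) + 3 := by positivity
      rw [i0, i1] at r1
      apply mul_left_cancel₀ hk.ne'
      linear_combination r1 + 2 * r2 - 2 * α * r3

lemma geg_lip {d : ℕ} (hd : 1 ≤ d) (k : ℕ) (t : ℝ) (ht : t ∈ Set.Icc (-1 : ℝ) 1) :
    (gegenbauer (((d : ℝ) - 1) / 2) (k + 1)).eval 1 - (gegenbauer (((d : ℝ) - 1) / 2) (k + 1)).eval t ≤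
      ((d : ℝ) - 1) * (((d + k).choose d : ℕ) : ℝ) * (1 - t) := by
  have hd' : (1 : ℝ) ≤ d := by exact_mod_cast hd
  have hα : 0 ≤ ((d : ℝ) - 1) / 2 := by linarith
  have hone : (gegenbauer (((d : ℝ) - 1) / 2 + 1) k).eval 1 = (((d + k).choose d : ℕ) : ℝ) := by
    have h := geg_one (d := d + 2) (by omega) k
    have e : ((d + 2 : ℕ) - 1 : ℝ) / 2 = ((d : ℝ) - 1) / 2 + 1 := by push_cast; ring
    rw [e] at h
    have h2 := Nat.add_one_mul_choose_eq (d + k) d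
    have h3 : (d + 2 + k - 1).choose k = (d + k + 1).choose (d + 1) := by
      rw [show d + 2 + k - 1 = (d + 1) + k by omega, show d + k + 1 = (d + 1) + k by omega, Nat.choose_symm_add]
    rw [h3] at h
    have h4 : ((d : ℝ) + k + 1) * ((d + k).choose d : ℕ) = ((d + k + 1).choose (d + 1) : ℕ) * ((d : ℝ) + 1) := by
      exact_mod_cast h2
    have hp : ((k : ℝ) + d + 1) ≠ 0 := by positivity
    apply mul_left_cancel₀ hp
    push_cast at h
    linarith
  have hb : ∀ s ∈ Set.Icc (-1 : ℝ) 1, ‖(gegenbauer (((d : ℝ) - 1) / 2) (k + 1)).derivative.eval s‖ ≤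
      ((d : ℝ) - 1) * (((d + k).choose d : ℕ) : ℝ) := by
    intro s hs
    rw [geg_deriv hα, Real.norm_eq_abs, abs_mul, abs_of_nonneg (by linarith)]
    have h := geg_abs (d := d + 2) (by omega) k s hs
    have e : ((d + 2 : ℕ) - 1 : ℝ) / 2 = ((d : ℝ) - 1) / 2 + 1 := by push_cast; ring
    rw [e, hone] at h
    rw [show 2 * (((d : ℝ) - 1) / 2) = (d : ℝ) - 1 by ring]
    exact mul_le_mul_of_nonneg_left h (by linarith)
  have := Convex.norm_image_sub_le_of_norm_hasDerivWithin_le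
    (f := fun s => (gegenbauer (((d : ℝ) - 1) / 2) (k + 1)).eval s)
    (fun s _ => (Polynomial.hasDerivAt _ s).hasDerivWithinAt) hb (convex_Icc (-1 : ℝ) 1) ht
    (by constructor <;> norm_num : (1 : ℝ) ∈ Set.Icc (-1 : ℝ) 1)
  rw [Real.norm_eq_abs, Real.norm_eq_abs, abs_of_nonneg (by linarith [ht.2] : 0 ≤ 1 - t)] at this
  exact (le_abs_self _).trans this

lemma gw_lip {d : ℕ} (hd : 1 ≤ d) (n : ℕ) (t : ℝ) (ht : t ∈ Set.Icc (-1 : ℝ) 1) :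
    (gw d n).eval 1 - (gw d n).eval t ≤ 2 * (d : ℝ) ^ d * (n : ℝ) ^ d * (1 - t) := by
  rw [gw_eval, gw_eval, ← Finset.sum_sub_distrib]
  have hd' : (1 : ℝ) ≤ d := by exact_mod_cast hd
  have ht1 : 0 ≤ 1 - t := by linarith [ht.2]
  obtain ⟨e, rfl⟩ : ∃ e, d = e + 1 := ⟨d - 1, by omega⟩
  have hterm : ∀ k ∈ Finset.Icc 1 n, Ak (e + 1) k * (gegenbauer ((((e + 1 : ℕ) : ℝ) - 1) / 2) k).eval 1 -
      Ak (e + 1) k * (gegenbauer ((((e + 1 : ℕ) : ℝ) - 1) / 2) k).eval t ≤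
        2 * ((e + 1 : ℕ) : ℝ) ^ (e + 1) * (n : ℝ) ^ e * (1 - t) := by
    intro k hk
    rw [Finset.mem_Icc] at hk
    obtain ⟨j, rfl⟩ : ∃ j, k = j + 1 := ⟨k - 1, by omega⟩
    have h1 := geg_lip hd j t ht
    have hA := Ak_nonneg hd hk.1
    rw [← mul_sub]
    refine (mul_le_mul_of_nonneg_left h1 hA).trans ?_
    rw [← mul_assoc]
    refine mul_le_mul_of_nonneg_right ?_ ht1
    have hch : (((e + 1 + j).choose (e + 1) : ℕ) : ℝ) ≤ ((e + 1 : ℕ) : ℝ) ^ (e + 1) * ((j + 1 : ℕ) : ℝ) ^ (e + 1) := by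
      have : (e + 1 + j).choose (e + 1) ≤ ((e + 1) * (j + 1)) ^ (e + 1) :=
        (Nat.choose_le_pow _ _).trans (Nat.pow_le_pow_left (by nlinarith) _)
      rw [mul_pow] at this
      exact_mod_cast this
    have hAd : Ak (e + 1) (j + 1) * (((e + 1 : ℕ) : ℝ) - 1) ≤ 2 / ((j + 1 : ℕ) : ℝ) := by
      rw [Ak_eq hd hk.1]
      rcases eq_or_ne (((e + 1 : ℕ) : ℝ) - 1) 0 with h0 | h0
      · rw [h0]; simp; positivity
      · have hj : (0 : ℝ) < ((j + 1 : ℕ) : ℝ) := by positivity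
        have hp : (0 : ℝ) < ((j + 1 : ℕ) : ℝ) + ((e + 1 : ℕ) : ℝ) - 1 := by linarith
        rw [div_mul_eq_mul_div, div_le_div_iff₀ (by
          have : 0 < ((e + 1 : ℕ) : ℝ) - 1 := lt_of_le_of_ne (by linarith) (Ne.symm h0)
          positivity) hj]
        have h3 : 0 ≤ ((e + 1 : ℕ) : ℝ) - 1 := by linarith
        have : (2 * ((j + 1 : ℕ) : ℝ) + ((e + 1 : ℕ) : ℝ) - 1) ≤ 2 * (((j + 1 : ℕ) : ℝ) + ((e + 1 : ℕ) : ℝ) - 1) := by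
          linarith
        have h4 := mul_le_mul_of_nonneg_right this (mul_nonneg h3 hj.le)
        linarith
    calc Ak (e + 1) (j + 1) * ((((e + 1 : ℕ) : ℝ) - 1) * (((e + 1 + j).choose (e + 1) : ℕ) : ℝ))
        = (Ak (e + 1) (j + 1) * (((e + 1 : ℕ) : ℝ) - 1)) * (((e + 1 + j).choose (e + 1) : ℕ) : ℝ) := by ring
      _ ≤ (2 / ((j + 1 : ℕ) : ℝ)) * (((e + 1 : ℕ) : ℝ) ^ (e + 1) * ((j + 1 : ℕ) : ℝ) ^ (e + 1)) :=
          mul_le_mul hAd hch (by positivity) (by positivity)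
      _ = 2 * ((e + 1 : ℕ) : ℝ) ^ (e + 1) * ((j + 1 : ℕ) : ℝ) ^ e := by
          have hj : ((j + 1 : ℕ) : ℝ) ≠ 0 := by positivity
          rw [pow_succ ((j + 1 : ℕ) : ℝ) e]
          field_simp
      _ ≤ _ := by
          have : ((j + 1 : ℕ) : ℝ) ≤ n := by exact_mod_cast hk.2
          gcongr
  refine (Finset.sum_le_sum hterm).trans ?_
  rw [Finset.sum_const, Nat.card_Icc, nsmul_eq_mul, pow_succ (n : ℝ) e]
  simp only [Nat.add_sub_cancel]
  apply le_of_eq; ring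

lemma gw_int {d : ℕ} (hd : 1 ≤ d) (n : ℕ) (x : Sph d) :
    ∫ y : Sph d, (gw d n).eval (inner ℝ (x : Euc d) (y : Euc d)) ∂(muSph d) = 0 := by
  have hx : ‖(x : Euc d)‖ = 1 := by simp
  have : ∀ y : Sph d, (gw d n).eval (inner ℝ (x : Euc d) (y : Euc d)) =
      ∑ k ∈ Finset.Icc 1 n, Ak d k * ev (zon (x : Euc d) k * 1) y := by
    intro y
    have hy : ‖(y : Euc d)‖ = 1 := by simp
    rw [gw_eval]
    simp only [ev, mul_one]
    refine Finset.sum_congr rfl fun k _ => ?_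
    rw [eval_zon _ _ hy]
  simp only [this]
  rw [integral_finsetSum _ (fun k _ => (ev_int _).const_mul _)]
  refine Finset.sum_eq_zero fun k hk => ?_
  rw [integral_const_mul, orth hd (l := 0) (by rw [Finset.mem_Icc] at hk; omega) (zon_HH _ hx k) ⟨?_, ?_⟩, mul_zero]
  · exact MvPolynomial.isHomogeneous_one _ _
  · simp [polyLaplacian]

end gegen


section cap
open scoped Pointwise

lemma muSph_apply {d : ℕ} {s : Set (Sph d)} (hs : MeasurableSet s) :
    muSph d s = (volume (Metric.ball (0 : Euc d) 1))⁻¹ * volume (Set.Ioo (0 : ℝ) 1 • ((↑) '' s : Set (Euc d))) := by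
  unfold muSph
  rw [Measure.smul_apply, smul_eq_mul, Measure.toSphere_apply' _ hs, Measure.toSphere_apply_univ, ← mul_assoc]
  congr 1
  have h1 : ((Module.finrank ℝ (Euc d) : ℕ) : ENNReal) ≠ 0 := by
    simp
  have h2 : ((Module.finrank ℝ (Euc d) : ℕ) : ENNReal) ≠ ⊤ := ENNReal.natCast_ne_top _
  rw [ENNReal.mul_inv (Or.inl h1) (Or.inl h2), mul_comm, ← mul_assoc, ENNReal.mul_inv_cancel h1 h2, one_mul]

lemma cone_mem {d : ℕ} (x : Sph d) {r s ρ : ℝ} (hr : 0 < r) (hr2 : r ≤ 2) (hρ : ρ = r / 16)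
    (hs : 1 / 2 ≤ s) (hs2 : s ≤ 3 / 4) :
    Metric.ball (s • (x : Euc d)) ρ ⊆ Set.Ioo (0 : ℝ) 1 • ((↑) '' (Metric.ball x r) : Set (Euc d)) := by
  intro z hz
  rw [mem_ball_iff_norm] at hz
  have hx : ‖(x : Euc d)‖ = 1 := by simp
  have hsx : ‖s • (x : Euc d)‖ = s := by rw [norm_smul, hx, mul_one, Real.norm_eq_abs, abs_of_nonneg (by linarith)]
  have h1 : |‖z‖ - s| ≤ ‖z - s • (x : Euc d)‖ := by
    have := abs_norm_sub_norm_le z (s • (x : Euc d)); rwa [hsx] at this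
  have h2 := abs_le.mp h1
  have hz0 : 3 / 8 ≤ ‖z‖ := by linarith
  have hz1 : ‖z‖ < 1 := by linarith
  have hzp : 0 < ‖z‖ := by linarith
  refine Set.mem_smul.mpr ⟨‖z‖, ⟨hzp, hz1⟩, ‖z‖⁻¹ • z, ⟨⟨‖z‖⁻¹ • z, ?_⟩, ?_, rfl⟩, ?_⟩
  · rw [mem_sphere_zero_iff_norm, norm_smul, norm_inv, norm_norm, inv_mul_cancel₀ hzp.ne']
  · rw [Metric.mem_ball, Subtype.dist_eq, dist_eq_norm]
    have e : ‖z‖⁻¹ • z - (x : Euc d) = ‖z‖⁻¹ • ((z - s • (x : Euc d)) + (s - ‖z‖) • (x : Euc d)) := by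
      rw [sub_smul, sub_add_sub_cancel, smul_sub, smul_smul, inv_mul_cancel₀ hzp.ne', one_smul]
    change ‖‖z‖⁻¹ • z - (x : Euc d)‖ < r
    rw [e, norm_smul, norm_inv, norm_norm]
    have h3 : ‖(z - s • (x : Euc d)) + (s - ‖z‖) • (x : Euc d)‖ ≤ 2 * ρ := by
      refine (norm_add_le _ _).trans ?_
      rw [norm_smul, hx, mul_one, Real.norm_eq_abs, abs_sub_comm]
      linarith
    rw [inv_mul_lt_iff₀ hzp]
    nlinarith
  · rw [smul_smul, mul_inv_cancel₀ hzp.ne', one_smul]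

lemma cap_lower {d : ℕ} (x : Sph d) {r : ℝ} (hr : 0 < r) (hr2 : r ≤ 2) :
    ENNReal.ofReal (r ^ d / 16 ^ (d + 1)) ≤ muSph d (Metric.ball x r) := by
  rw [muSph_apply measurableSet_ball]
  set V := volume (Metric.ball (0 : Euc d) 1) with hV
  have hV0 : V ≠ 0 := (Metric.measure_ball_pos _ _ one_pos).ne'
  have hVt : V ≠ ⊤ := measure_ball_lt_top.ne
  obtain ⟨ρ, hρ⟩ : ∃ ρ, ρ = r / 16 := ⟨_, rfl⟩
  have hρ0 : 0 < ρ := by rw [hρ]; positivity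
  set K := ⌊2 / r⌋₊ + 1 with hK
  have hKr : 2 / r ≤ K := by rw [hK]; push_cast; exact (Nat.lt_floor_add_one _).le
  have hx : ‖(x : Euc d)‖ = 1 := by simp
  have hsub : (⋃ k ∈ Finset.range K, Metric.ball ((1 / 2 + 2 * ρ * (k : ℝ)) • (x : Euc d)) ρ) ⊆
      Set.Ioo (0 : ℝ) 1 • ((↑) '' (Metric.ball x r) : Set (Euc d)) := by
    intro z hz
    simp only [Set.mem_iUnion, Finset.mem_range] at hz
    obtain ⟨k, hk, hz⟩ := hz
    refine cone_mem x hr hr2 hρ ?_ ?_ hz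
    · have : 0 ≤ 2 * ρ * (k : ℝ) := by positivity
      linarith
    · have h1 : (k : ℝ) ≤ 2 / r := (Nat.le_floor_iff (by positivity)).mp (by omega)
      have h2 : 2 * ρ * (k : ℝ) ≤ 2 * ρ * (2 / r) := by gcongr
      have h3 : 2 * ρ * (2 / r) = 1 / 4 := by rw [hρ]; field_simp; norm_num
      linarith
  have hmeas : volume (⋃ k ∈ Finset.range K, Metric.ball ((1 / 2 + 2 * ρ * (k : ℝ)) • (x : Euc d)) ρ) =
      K * (ENNReal.ofReal (ρ ^ (d + 1)) * V) := by
    rw [measure_biUnion_finset]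
    · simp only [Measure.addHaar_ball_of_pos _ _ hρ0]
      rw [Finset.sum_const, Finset.card_range, nsmul_eq_mul]
      simp [hV]
    · intro k _ l _ hkl
      apply Metric.ball_disjoint_ball
      rw [dist_eq_norm, ← sub_smul, norm_smul, hx, mul_one, Real.norm_eq_abs]
      have : (1 : ℝ) ≤ |(k : ℝ) - l| := by
        have h : (1 : ℤ) ≤ |(k : ℤ) - l| := Int.one_le_abs (sub_ne_zero.mpr (by exact_mod_cast hkl))
        exact_mod_cast h
      rw [show 1 / 2 + 2 * ρ * (k : ℝ) - (1 / 2 + 2 * ρ * (l : ℝ)) = 2 * ρ * ((k : ℝ) - l) by ring, abs_mul,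
        abs_of_pos (by positivity : 0 < 2 * ρ)]
      nlinarith
    · intro k _; exact measurableSet_ball
  calc ENNReal.ofReal (r ^ d / 16 ^ (d + 1)) ≤ ENNReal.ofReal ((K : ℝ) * ρ ^ (d + 1)) := by
        apply ENNReal.ofReal_le_ofReal
        have h1 : 2 / r * ρ ^ (d + 1) ≤ K * ρ ^ (d + 1) := by gcongr
        have h2 : 2 / r * ρ ^ (d + 1) = 2 * (r ^ d / 16 ^ (d + 1)) := by
          rw [hρ, div_pow, pow_succ r]; field_simp
        have h3 : 0 ≤ r ^ d / 16 ^ (d + 1) := by positivity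
        linarith
    _ = V⁻¹ * (K * (ENNReal.ofReal (ρ ^ (d + 1)) * V)) := by
        rw [ENNReal.ofReal_mul (by positivity), ENNReal.ofReal_natCast, ← mul_assoc (K : ENNReal), mul_comm V⁻¹, mul_assoc _ V,
          ENNReal.mul_inv_cancel hV0 hVt, mul_one]
    _ ≤ _ := by
        rw [← hmeas]
        gcongr

lemma cap_lower' {d : ℕ} (x : Sph d) {r : ℝ} (hr : 0 < r) (h1 : r ^ d / 16 ^ (d + 1) ≤ 1) :
    ENNReal.ofReal (r ^ d / 16 ^ (d + 1)) ≤ muSph d (Metric.ball x r) := by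
  rcases le_or_gt r 2 with h | h
  · exact cap_lower x hr h
  · have : Metric.ball x r = Set.univ := by
      rw [Set.eq_univ_iff_forall]
      intro y
      rw [Metric.mem_ball, Subtype.dist_eq, dist_eq_norm]
      have := norm_sub_le (y : Euc d) (x : Euc d)
      simp only [norm_eq_of_mem_sphere] at this
      linarith
    rw [this, measure_univ]
    exact ENNReal.ofReal_le_one.mpr h1

end cap


section chunk

open Classical in
/-- finite sets which can be built by adding neighbours one at a time -/
inductive Good {V : Type*} (near : V → V → Prop) : Finset V → Prop
  | single (v : V) : Good near {v}
  | ins (v w : V) (S : Finset V) : Good near S → w ∈ S → v ∉ S → near v w → Good near (insert v S)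

open Classical in
lemma good_univ {V : Type*} [Fintype V] [Nonempty V] (near : V → V → Prop)
    (h : ∀ S : Finset V, S.Nonempty → S ≠ Finset.univ → ∃ w ∈ S, ∃ v, v ∉ S ∧ near v w) :
    Good near (Finset.univ : Finset V) := by
  obtain ⟨v0⟩ := (inferInstance : Nonempty V)
  obtain ⟨S, hS, hmax⟩ := Finset.exists_max_image (Finset.univ.filter (fun S : Finset V => Good near S ∧ S.Nonempty))
    (fun S => S.card) ⟨{v0}, by simp [Good.single]⟩
  simp only [Finset.mem_filter, Finset.mem_univ, true_and] at hS hmax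
  by_cases hu : S = Finset.univ
  · rw [← hu]; exact hS.1
  · obtain ⟨w, hw, v, hv, hn⟩ := h S hS.2 hu
    have := hmax (insert v S) ⟨Good.ins v w S hS.1 hw hv hn, by simp⟩
    rw [Finset.card_insert_of_notMem hv] at this
    omega

open Classical in
lemma chunk {V : Type*} [Fintype V] (near : V → V → Prop) (hrefl : ∀ v, near v v)
    (S : Finset V) (hS : Good near S) :
    ∀ (q : V → V → ℝ) (K : ℕ), (∀ u v, 0 ≤ q u v) → (∀ u v, q u v ≠ 0 → near u v) →
      (∀ v ∈ S, 1 ≤ q v v) → ∑ v ∈ S, ∑ u, q u v = K →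
      ∃ p : Fin K → V → ℝ, (∀ i u, 0 ≤ p i u) ∧ (∀ i, ∑ u, p i u = 1) ∧
        (∀ u, ∑ i, p i u = ∑ v ∈ S, q u v) ∧ ∀ i, ∃ c, ∀ u, p i u ≠ 0 → near u c := by
  induction hS with
  | single v =>
    intro q K hq hn h1 hK
    simp only [Finset.sum_singleton] at hK ⊢
    have hle : q v v ≤ ∑ u, q u v := Finset.single_le_sum (fun u _ => hq u v) (Finset.mem_univ v)
    have hK1 : (1 : ℝ) ≤ K := by rw [← hK]; exact (h1 v (by simp)).trans hle
    have hK0 : (K : ℝ) ≠ 0 := by linarith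
    refine ⟨fun _ u => q u v / K, fun i u => div_nonneg (hq u v) (by positivity), fun i => ?_, fun u => ?_,
      fun i => ⟨v, fun u hu => hn u v ?_⟩⟩
    · rw [← Finset.sum_div, hK, div_self hK0]
    · rw [Finset.sum_const, Finset.card_univ, Fintype.card_fin, nsmul_eq_mul]; field_simp
    · intro h; apply hu; simp [h]
  | ins v w S hS hw hv hvw ih =>
    intro q K hq hn h1 hK
    rw [Finset.sum_insert hv] at hK
    obtain ⟨T, hT⟩ : ∃ T, T = ∑ u, q u v := ⟨_, rfl⟩
    rw [← hT] at hK
    have hle : q v v ≤ T := by rw [hT]; exact Finset.single_le_sum (fun u _ => hq u v) (Finset.mem_univ v)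
    have hvv := h1 v (by simp)
    obtain ⟨k, hk⟩ : ∃ k, k = ⌊T⌋₊ := ⟨_, rfl⟩
    have hkT : (k : ℝ) ≤ T := by rw [hk]; exact Nat.floor_le (by linarith)
    have hTk : T < k + 1 := by rw [hk]; exact Nat.lt_floor_add_one T
    have hk1 : 1 ≤ k := by rw [hk]; exact (Nat.one_le_floor_iff T).mpr (by linarith)
    have hk1' : (1 : ℝ) ≤ k := by exact_mod_cast hk1
    have hk0 : (k : ℝ) ≠ 0 := by linarith
    have hSn : 0 ≤ ∑ x ∈ S, ∑ u, q u x := Finset.sum_nonneg fun x _ => Finset.sum_nonneg fun u _ => hq u x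
    have hkK : k ≤ K := by
      have : (k : ℝ) ≤ K := by linarith
      exact_mod_cast this
    obtain ⟨L, rfl⟩ : ∃ L, K = k + L := ⟨K - k, by omega⟩
    obtain ⟨r, hr⟩ : ∃ r, r = T - k := ⟨_, rfl⟩
    have hr0 : 0 ≤ r := by linarith
    have hsum2 : ∀ u, ∑ x ∈ S, (if u = v ∧ x = w then r else 0) = if u = v then r else 0 := by
      intro u
      by_cases huv : u = v
      · simp [huv, hw]
      · simp [huv]
    obtain ⟨p, hp0, hp1, hp2, hp3⟩ := ih (fun u x => q u x + if u = v ∧ x = w then r else 0) L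
      (fun u x => add_nonneg (hq u x) (by split_ifs <;> linarith))
      (by
        intro u x hux
        by_cases h : u = v ∧ x = w
        · rw [h.1, h.2]; exact hvw
        · simp only [h, if_false, add_zero] at hux
          exact hn u x hux)
      (by
        intro x hx
        have := h1 x (Finset.mem_insert_of_mem hx)
        have h2 : 0 ≤ (if x = v ∧ x = w then r else 0) := by split_ifs <;> linarith
        linarith)
      (by
        simp only [Finset.sum_add_distrib]
        rw [Finset.sum_comm (s := S) (t := Finset.univ) (f := fun x u => if u = v ∧ x = w then r else 0)]
        simp only [hsum2]
        rw [Finset.sum_ite_eq' Finset.univ v, if_pos (Finset.mem_univ v)]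
        push_cast at hK
        linarith)
    refine ⟨Fin.append (fun _ u => (q u v - if u = v then r else 0) / k) p, ?_, ?_, ?_, ?_⟩
    · intro i u
      refine Fin.addCases (fun i => ?_) (fun i => ?_) i
      · rw [Fin.append_left]
        apply div_nonneg _ (by linarith)
        by_cases huv : u = v
        · subst huv; rw [if_pos rfl]; linarith
        · simp [huv, hq]
      · rw [Fin.append_right]; exact hp0 i u
    · intro i
      refine Fin.addCases (fun i => ?_) (fun i => ?_) i
      · rw [Fin.append_left, ← Finset.sum_div, Finset.sum_sub_distrib, ← hT,
          Finset.sum_ite_eq' Finset.univ v, if_pos (Finset.mem_univ v), hr]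
        field_simp
        ring
      · rw [Fin.append_right]; exact hp1 i
    · intro u
      rw [Fin.sum_univ_add]
      simp only [Fin.append_left, Fin.append_right]
      rw [hp2, Finset.sum_add_distrib, hsum2, Finset.sum_const, Finset.card_univ, Fintype.card_fin, nsmul_eq_mul,
        Finset.sum_insert hv]
      field_simp
      ring
    · intro i
      refine Fin.addCases (fun i => ?_) (fun i => ?_) i
      · refine ⟨v, fun u hu => ?_⟩
        rw [Fin.append_left] at hu
        by_cases huv : u = v
        · rw [huv]; exact hrefl v
        · apply hn
          intro h
          apply hu
          simp [h, huv]
      · rw [Fin.append_right]; exact hp3 i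

end chunk


section net
open Classical

variable {X : Type*} [MetricSpace X] [MeasurableSpace X] [BorelSpace X]

lemma net_exists [Nonempty X] (μ : Measure X) [IsProbabilityMeasure μ] {N : ℕ} {δ : ℝ}
    (hN : 1 ≤ N) (hb : ∀ x, (N : ENNReal)⁻¹ ≤ μ (Metric.ball x (δ / 2))) :
    ∃ t : Finset X, (∀ x ∈ t, ∀ y ∈ t, x ≠ y → δ ≤ dist x y) ∧ ∀ z, ∃ x ∈ t, dist z x ≤ δ := by
  have hN0 : (N : ENNReal) ≠ 0 := by simp; omega
  have hNt : (N : ENNReal) ≠ ⊤ := ENNReal.natCast_ne_top _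
  have hcard : ∀ t : Finset X, (∀ x ∈ t, ∀ y ∈ t, x ≠ y → δ ≤ dist x y) → t.card ≤ N := by
    intro t ht
    have h1 : μ (⋃ x ∈ t, Metric.ball x (δ / 2)) = ∑ x ∈ t, μ (Metric.ball x (δ / 2)) := by
      apply measure_biUnion_finset
      · intro x hx y hy hxy
        apply Metric.ball_disjoint_ball
        have := ht x hx y hy hxy
        linarith
      · intro x _; exact measurableSet_ball
    have h2 : (t.card : ENNReal) * (N : ENNReal)⁻¹ ≤ 1 := by
      calc (t.card : ENNReal) * (N : ENNReal)⁻¹ = ∑ x ∈ t, (N : ENNReal)⁻¹ := by simp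
        _ ≤ ∑ x ∈ t, μ (Metric.ball x (δ / 2)) := Finset.sum_le_sum fun x _ => hb x
        _ = μ (⋃ x ∈ t, Metric.ball x (δ / 2)) := h1.symm
        _ ≤ 1 := prob_le_one
    rw [← div_eq_mul_inv, ENNReal.div_le_iff hN0 hNt, one_mul] at h2
    exact_mod_cast h2
  let P : ℕ → Prop := fun n => ∃ t : Finset X, t.card = n ∧ ∀ x ∈ t, ∀ y ∈ t, x ≠ y → δ ≤ dist x y
  have hP0 : P 0 := ⟨∅, by simp⟩
  obtain ⟨t, htc, ht⟩ : P (Nat.findGreatest P N) := Nat.findGreatest_spec (Nat.zero_le N) hP0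
  refine ⟨t, ht, fun z => ?_⟩
  by_contra! hz
  have hδ : 0 < δ := by
    obtain ⟨x⟩ := (inferInstance : Nonempty X)
    by_contra h
    have h3 := hb x
    rw [Metric.ball_eq_empty.mpr (by linarith), measure_empty] at h3
    simp at h3
  have hzt : z ∉ t := fun h => by have := hz z h; rw [dist_self] at this; linarith
  have hsep : ∀ x ∈ insert z t, ∀ y ∈ insert z t, x ≠ y → δ ≤ dist x y := by
    intro x hx y hy hxy
    rw [Finset.mem_insert] at hx hy
    rcases hx with rfl | hx <;> rcases hy with rfl | hy
    · exact absurd rfl hxy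
    · exact (hz y hy).le
    · rw [dist_comm]; exact (hz x hx).le
    · exact ht x hx y hy hxy
  have h1 : (insert z t).card = Nat.findGreatest P N + 1 := by
    rw [Finset.card_insert_of_notMem hzt, htc]
  have h2 := hcard _ hsep
  rw [h1] at h2
  exact Nat.findGreatest_is_greatest (Nat.lt_succ_self _) h2 ⟨_, h1, hsep⟩

lemma measures_exist [Nonempty X] [PreconnectedSpace X] (μ : Measure X) [IsProbabilityMeasure μ] {N : ℕ} {δ : ℝ}
    (hN : 1 ≤ N) (hδ : 0 < δ) (hb : ∀ x, (N : ENNReal)⁻¹ ≤ μ (Metric.ball x (δ / 2))) :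
    ∃ ν : Fin N → Measure X, (∀ i, IsProbabilityMeasure (ν i)) ∧ (∑ i, ν i = (N : ENNReal) • μ) ∧
      ∀ i, ∃ c, ∀ᵐ x ∂(ν i), dist x c ≤ 3 * δ := by
  obtain ⟨t, hsep, hcov⟩ := net_exists μ hN hb
  obtain ⟨M, hM⟩ : ∃ M, M = t.card := ⟨_, rfl⟩
  let eqv := t.equivFinOfCardEq hM.symm
  let v : Fin M → X := fun j => (eqv.symm j : X)
  have hvsep : ∀ i j, i ≠ j → δ ≤ dist (v i) (v j) := by
    intro i j hij
    refine hsep _ (eqv.symm i).2 _ (eqv.symm j).2 ?_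
    intro h
    exact hij (eqv.symm.injective (Subtype.ext h))
  have hvcov : ∀ z, ∃ j, dist z (v j) ≤ δ := by
    intro z
    obtain ⟨x, hx, h⟩ := hcov z
    refine ⟨eqv ⟨x, hx⟩, ?_⟩
    simpa [v] using h
  have hne : Nonempty (Fin M) := by
    obtain ⟨x⟩ := (inferInstance : Nonempty X)
    exact ⟨(hvcov x).choose⟩
  let C : Fin M → Set X := fun j => {x | ∀ i, dist x (v j) ≤ dist x (v i) ∧ (i < j → dist x (v j) < dist x (v i))}
  have hCm : ∀ j, MeasurableSet (C j) := by
    intro j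
    simp only [C, Set.ofPred_forall, Set.ofPred_and]
    refine MeasurableSet.iInter fun i => MeasurableSet.inter ?_ ?_
    · exact measurableSet_le (by fun_prop) (by fun_prop)
    · refine MeasurableSet.iInter fun _ => ?_
      exact measurableSet_lt (by fun_prop) (by fun_prop)
  have hCd : Pairwise (Function.onFun Disjoint C) := by
    intro i j hij
    rw [Function.onFun, Set.disjoint_left]
    intro x hi hj
    rcases lt_or_gt_of_ne hij with h | h
    · have h1 := (hj i).2 h
      have h2 := (hi j).1
      linarith
    · have h1 := (hi j).2 h
      have h2 := (hj i).1
      linarith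
  have hCu : (⋃ j, C j) = Set.univ := by
    rw [Set.eq_univ_iff_forall]
    intro x
    obtain ⟨j0, _, hj0⟩ := Finset.exists_min_image (Finset.univ : Finset (Fin M)) (fun j => dist x (v j)) Finset.univ_nonempty
    let A := Finset.univ.filter (fun j : Fin M => dist x (v j) ≤ dist x (v j0))
    have hA : A.Nonempty := ⟨j0, by simp [A]⟩
    have hm := A.min'_mem hA
    rw [Set.mem_iUnion]
    refine ⟨A.min' hA, fun i => ?_⟩
    have h1 : dist x (v (A.min' hA)) ≤ dist x (v j0) := (Finset.mem_filter.mp hm).2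
    refine ⟨h1.trans (hj0 i (Finset.mem_univ i)), fun hi => ?_⟩
    refine lt_of_le_of_lt h1 ?_
    by_contra hc
    have : i ∈ A := by simp only [A, Finset.mem_filter, Finset.mem_univ, true_and]; linarith
    exact absurd (A.min'_le i this) (not_le.mpr hi)
  have hCδ : ∀ j, ∀ x ∈ C j, dist x (v j) ≤ δ := by
    intro j x hx
    obtain ⟨i, hi⟩ := hvcov x
    exact ((hx i).1).trans hi
  have hCb : ∀ j, Metric.ball (v j) (δ / 2) ⊆ C j := by
    intro j x hx i
    rw [Metric.mem_ball] at hx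
    by_cases hij : i = j
    · subst hij; simp
    · have h1 := hvsep i j hij
      have h2 := dist_triangle_left (v i) (v j) x
      exact ⟨by linarith, fun _ => by linarith⟩
  have hCμ : ∀ j, (N : ENNReal)⁻¹ ≤ μ (C j) := fun j => (hb (v j)).trans (measure_mono (hCb j))
  have hNr : (0 : ℝ) < N := by exact_mod_cast hN
  have hCr : ∀ j, 1 ≤ (N : ℝ) * μ.real (C j) := by
    intro j
    have := ENNReal.toReal_mono (measure_ne_top μ _) (hCμ j)
    rw [ENNReal.toReal_inv, ENNReal.toReal_natCast] at this
    rw [measureReal_def]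
    rw [inv_le_iff_one_le_mul₀ hNr] at this
    linarith
  have hsum1 : ∑ j, μ.real (C j) = 1 := by
    have h := measureReal_iUnion_fintype (μ := μ) hCd hCm
    rw [← h, hCu, probReal_univ]
  let near : Fin M → Fin M → Prop := fun i j => dist (v i) (v j) ≤ 2 * δ
  have hgood : Good near (Finset.univ : Finset (Fin M)) := by
    apply good_univ
    intro S hS hSu
    have hpre : IsPreconnected (Set.univ : Set X) := isPreconnected_univ
    rw [isPreconnected_closed_iff] at hpre
    obtain ⟨i0, hi0⟩ := hS
    obtain ⟨j0, hj0⟩ : ∃ j, j ∉ S := by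
      by_contra! h
      exact hSu (Finset.eq_univ_iff_forall.mpr h)
    obtain ⟨x, -, hxA, hxB⟩ := hpre (⋃ j ∈ S, Metric.closedBall (v j) δ) (⋃ j ∈ Finset.univ \ S, Metric.closedBall (v j) δ)
      (S.finite_toSet.isClosed_biUnion fun j _ => Metric.isClosed_closedBall)
      ((Finset.univ \ S).finite_toSet.isClosed_biUnion fun j _ => Metric.isClosed_closedBall)
      (by
        intro z _
        obtain ⟨j, hj⟩ := hvcov z
        by_cases hjS : j ∈ S
        · left; simp only [Set.mem_iUnion]; exact ⟨j, hjS, hj⟩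
        · right; simp only [Set.mem_iUnion]; exact ⟨j, by simp [hjS], hj⟩)
      ⟨v i0, trivial, by simp only [Set.mem_iUnion]; exact ⟨i0, hi0, by simp [hδ.le]⟩⟩
      ⟨v j0, trivial, by simp only [Set.mem_iUnion]; exact ⟨j0, by simp [hj0], by simp [hδ.le]⟩⟩
    simp only [Set.mem_iUnion, Metric.mem_closedBall] at hxA hxB
    obtain ⟨w, hw, hw2⟩ := hxA
    obtain ⟨u, hu, hu2⟩ := hxB
    refine ⟨w, hw, u, by simpa using hu, ?_⟩
    have := dist_triangle_left (v u) (v w) x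
    simp only [near]
    linarith
  obtain ⟨p, hp0, hp1, hp2, hp3⟩ := chunk near (fun j => by simp [near, hδ.le]) Finset.univ hgood
    (fun i j => if i = j then (N : ℝ) * μ.real (C i) else 0) N
    (by intro i j; split_ifs; · have := hCr i; linarith
        · exact le_rfl)
    (by
      intro i j h
      by_cases hij : i = j
      · subst hij; simp [near, hδ.le]
      · simp [hij] at h)
    (by intro j _; simpa using hCr j)
    (by
      simp only [Finset.sum_ite_eq', Finset.mem_univ, if_true]
      rw [← Finset.mul_sum, hsum1, mul_one])
  have hCr0 : ∀ j, 0 < μ.real (C j) := by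
    intro j
    have := hCr j
    by_contra h
    have : (N : ℝ) * μ.real (C j) ≤ 0 := mul_nonpos_of_nonneg_of_nonpos hNr.le (by linarith)
    have := hCr j
    linarith
  refine ⟨fun i => ∑ j, ENNReal.ofReal (p i j / μ.real (C j)) • μ.restrict (C j), ?_, ?_, ?_⟩
  · intro i
    constructor
    rw [Measure.finsetSum_apply]
    have : ∀ j, (ENNReal.ofReal (p i j / μ.real (C j)) • μ.restrict (C j)) Set.univ = ENNReal.ofReal (p i j) := by
      intro j
      rw [Measure.smul_apply, Measure.restrict_apply_univ, smul_eq_mul, ← ofReal_measureReal,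
        ← ENNReal.ofReal_mul (div_nonneg (hp0 i j) (hCr0 j).le), div_mul_cancel₀ _ (hCr0 j).ne']
    simp only [this]
    rw [← ENNReal.ofReal_sum_of_nonneg fun j _ => hp0 i j, hp1, ENNReal.ofReal_one]
  · rw [Finset.sum_comm]
    have : ∀ j, ∑ i, ENNReal.ofReal (p i j / μ.real (C j)) • μ.restrict (C j) = (N : ENNReal) • μ.restrict (C j) := by
      intro j
      rw [← Finset.sum_smul, ← ENNReal.ofReal_sum_of_nonneg fun i _ => div_nonneg (hp0 i j) (hCr0 j).le,
        ← Finset.sum_div, hp2]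
      simp only [Finset.sum_ite_eq, Finset.mem_univ, if_true]
      rw [mul_div_cancel_right₀ _ (hCr0 j).ne', ENNReal.ofReal_natCast]
    simp only [this]
    rw [← Finset.smul_sum]
    congr 1
    have h := Measure.restrict_iUnion (μ := μ) hCd hCm
    rw [hCu, Measure.restrict_univ, Measure.sum_fintype] at h
    exact h.symm
  · intro i
    obtain ⟨c, hc⟩ := hp3 i
    refine ⟨v c, ?_⟩
    rw [ae_iff, Measure.finsetSum_apply]
    refine Finset.sum_eq_zero fun j _ => ?_
    by_cases hpj : p i j = 0
    · simp [hpj]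
    · rw [Measure.smul_apply]
      have h0 : μ.restrict (C j) {a | ¬ dist a (v c) ≤ 3 * δ} = 0 := by
        rw [← ae_iff]
        refine (ae_restrict_mem (hCm j)).mono fun x hx => ?_
        have h1 := hCδ j x hx
        have h2 : dist (v j) (v c) ≤ 2 * δ := hc j hpj
        have h3 := dist_triangle x (v j) (v c)
        linarith
      rw [h0, smul_zero]

end net


section random
open Classical

lemma random_choice {X : Type*} [MetricSpace X] [CompactSpace X] [Nonempty X] [MeasurableSpace X] [BorelSpace X]
    {N : ℕ} (ν : Fin N → Measure X) [∀ i, IsProbabilityMeasure (ν i)]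
    (k : X → X → ℝ) (hk : Continuous (Function.uncurry k)) :
    ∃ x : Fin N → X, ∑ i, ∑ j, k (x i) (x j) ≤
      ∑ i, ∑ j, (if i = j then ∫ a, k a a ∂(ν i) else ∫ a, ∫ b, k a b ∂(ν j) ∂(ν i)) := by
  let π := Measure.pi ν
  have hc : ∀ i j, Continuous (fun x : Fin N → X => k (x i) (x j)) := fun i j =>
    Continuous.comp (g := Function.uncurry k) (f := fun x : Fin N → X => (x i, x j)) hk (by fun_prop)
  have hIntg : ∀ i j, Integrable (fun x : Fin N → X => k (x i) (x j)) π := fun i j =>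
    (hc i j).integrable_of_hasCompactSupport (HasCompactSupport.of_compactSpace _)
  have hIntg2 : Integrable (fun x : Fin N → X => ∑ i, ∑ j, k (x i) (x j)) π :=
    integrable_finsetSum _ fun i _ => integrable_finsetSum _ fun j _ => hIntg i j
  obtain ⟨x, hx⟩ := exists_le_integral hIntg2
  refine ⟨x, hx.trans (le_of_eq ?_)⟩
  rw [integral_finsetSum _ fun i _ => integrable_finsetSum _ fun j _ => hIntg i j]
  refine Finset.sum_congr rfl fun i _ => ?_
  rw [integral_finsetSum _ fun j _ => hIntg i j]
  refine Finset.sum_congr rfl fun j _ => ?_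
  by_cases hij : i = j
  · subst hij
    rw [if_pos rfl]
    have := (measurePreserving_eval ν i)
    have hcc : Continuous (fun a => k a a) := hk.comp (continuous_id.prodMk continuous_id)
    rw [← this.map_eq, integral_map this.measurable.aemeasurable hcc.aestronglyMeasurable]
  · rw [if_neg hij]
    have hind := (ProbabilityTheory.iIndepFun_pi (μ := ν) (X := fun _ => id) (fun _ => measurable_id.aemeasurable)).indepFun hij
    simp only [id] at hind
    rw [ProbabilityTheory.indepFun_iff_map_prod_eq_prod_map_map (measurable_pi_apply i).aemeasurable (measurable_pi_apply j).aemeasurable] at hind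
    have e : ∀ i, Measure.map (fun ω : Fin N → X => ω i) π = ν i := fun i => (measurePreserving_eval ν i).map_eq
    have hind' : Measure.map (fun ω : Fin N → X => (ω i, ω j)) π = (ν i).prod (ν j) := by
      rw [← e i, ← e j]; exact hind
    have hki : Integrable (Function.uncurry k) ((ν i).prod (ν j)) :=
      hk.integrable_of_hasCompactSupport (HasCompactSupport.of_compactSpace _)
    have h1 := integral_prod _ hki
    simp only [Function.uncurry] at h1
    rw [← h1, ← hind', integral_map (by fun_prop) (by exact hk.aestronglyMeasurable)]

lemma points_exist {d : ℕ} (hd : 1 ≤ d) (n : ℕ) {N : ℕ} {δ : ℝ} (hN : 1 ≤ N) (hδ : 0 < δ)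
    (hb : ∀ x : Sph d, (N : ENNReal)⁻¹ ≤ muSph d (Metric.ball x (δ / 2))) :
    ∃ x : Fin N → Sph d, ∑ i, ∑ j, (gw d n).eval (inner ℝ (x i : Euc d) (x j : Euc d)) ≤
      N * (2 * (d : ℝ) ^ d * (n : ℝ) ^ d * (18 * δ ^ 2)) := by
  have : Nonempty (Sph d) := by
    obtain ⟨a, _, _⟩ := unit_pair hd 0 (by constructor <;> norm_num)
    exact ⟨a⟩
  have : PreconnectedSpace (Sph d) := by
    apply Subtype.preconnectedSpace
    apply isPreconnected_sphere
    rw [← Module.finrank_eq_rank]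
    simp
    omega
  obtain ⟨ν, hν, hsum, hsupp⟩ := measures_exist (muSph d) hN hδ hb
  let k : Sph d → Sph d → ℝ := fun a b => (gw d n).eval (inner ℝ (a : Euc d) (b : Euc d))
  have hk : Continuous (Function.uncurry k) := by
    simp only [k, Function.uncurry_def]
    refine (Polynomial.continuous _).comp ?_
    fun_prop
  obtain ⟨x, hx⟩ := random_choice ν k hk
  refine ⟨x, hx.trans ?_⟩
  have hka : ∀ a, Continuous (k a) := fun a => hk.comp (continuous_const.prodMk continuous_id)
  have hci : ∀ {f : Sph d → ℝ} (_ : Continuous f) (i), Integrable f (ν i) := fun hf i =>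
    hf.integrable_of_hasCompactSupport (HasCompactSupport.of_compactSpace _)
  have hFc : ∀ j, Continuous (fun a => ∫ b, k a b ∂(ν j)) := fun j =>
    continuous_parametric_integral_of_continuous (s := Set.univ) hk isCompact_univ |> fun h => by simpa using h
  have hzero : ∀ a, ∑ j, ∫ b, k a b ∂(ν j) = 0 := by
    intro a
    rw [← integral_finsetSum_measure fun j _ => hci (hka a) j, hsum, integral_smul_measure]
    simp only [k]
    rw [gw_int hd n a, smul_zero]
  have htot : ∀ i, ∑ j, ∫ a, ∫ b, k a b ∂(ν j) ∂(ν i) = 0 := by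
    intro i
    rw [← integral_finsetSum _ fun j _ => hci (hFc j) i]
    simp [hzero]
  have hrow : ∀ i, ∑ j, (if i = j then ∫ a, k a a ∂(ν i) else ∫ a, ∫ b, k a b ∂(ν j) ∂(ν i)) ≤
      2 * (d : ℝ) ^ d * (n : ℝ) ^ d * (18 * δ ^ 2) := by
    intro i
    have e : ∀ j, (if i = j then ∫ a, k a a ∂(ν i) else ∫ a, ∫ b, k a b ∂(ν j) ∂(ν i)) =
        (∫ a, ∫ b, k a b ∂(ν j) ∂(ν i)) +
          if i = j then ∫ a, k a a ∂(ν i) - ∫ a, ∫ b, k a b ∂(ν i) ∂(ν i) else 0 := by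
      intro j
      split_ifs with h
      · subst h; ring
      · ring
    simp only [e]
    rw [Finset.sum_add_distrib, htot, zero_add, Finset.sum_ite_eq, if_pos (Finset.mem_univ i)]
    have hkaa : ∀ a : Sph d, k a a = (gw d n).eval 1 := by
      intro a
      simp only [k]
      rw [real_inner_self_eq_norm_sq]; simp
    simp only [hkaa]
    obtain ⟨c, hc⟩ := hsupp i
    have hlow : ∀ᵐ a ∂(ν i), ∀ᵐ b ∂(ν i), (gw d n).eval 1 - 2 * (d : ℝ) ^ d * (n : ℝ) ^ d * (18 * δ ^ 2) ≤ k a b := by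
      filter_upwards [hc] with a ha
      filter_upwards [hc] with b hb
      have hab : dist a b ≤ 6 * δ := by
        have := dist_triangle_right a b c; linarith
      rw [Subtype.dist_eq, dist_eq_norm] at hab
      have h1 : ‖(a : Euc d) - b‖ ^ 2 ≤ (6 * δ) ^ 2 := pow_le_pow_left₀ (norm_nonneg _) hab 2
      rw [norm_sub_sq_real] at h1
      have ha1 : ‖(a : Euc d)‖ = 1 := by simp
      have hb1 : ‖(b : Euc d)‖ = 1 := by simp
      have hi := abs_le.mp (abs_real_inner_le_norm (a : Euc d) (b : Euc d))
      rw [ha1, hb1] at hi h1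
      have h2 := gw_lip hd n (inner ℝ (a : Euc d) (b : Euc d)) ⟨by linarith [hi.1], by linarith [hi.2]⟩
      have h3 : 2 * (d : ℝ) ^ d * (n : ℝ) ^ d * (1 - inner ℝ (a : Euc d) (b : Euc d)) ≤
          2 * (d : ℝ) ^ d * (n : ℝ) ^ d * (18 * δ ^ 2) := by
        gcongr
        linarith
      simp only [k]
      linarith
    have hmain : (gw d n).eval 1 - 2 * (d : ℝ) ^ d * (n : ℝ) ^ d * (18 * δ ^ 2) ≤ ∫ a, ∫ b, k a b ∂(ν i) ∂(ν i) := by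
      have h1 : ∀ᵐ a ∂(ν i), (gw d n).eval 1 - 2 * (d : ℝ) ^ d * (n : ℝ) ^ d * (18 * δ ^ 2) ≤ ∫ b, k a b ∂(ν i) := by
        filter_upwards [hlow] with a ha
        have := integral_mono_ae (integrable_const _) (hci (hka a) i) ha
        simpa using this
      have := integral_mono_ae (integrable_const _) (hci (hFc i) i) h1
      simpa using this
    have : ∫ _a : Sph d, (gw d n).eval 1 ∂(ν i) = (gw d n).eval 1 := by simp
    rw [this]
    linarith
  refine (Finset.sum_le_sum fun i _ => hrow i).trans ?_
  rw [Finset.sum_const, Finset.card_univ, Fintype.card_fin, nsmul_eq_mul]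

end random


section partition
open scoped Pointwise

lemma null_of_cone {d : ℕ} {S : Set (Sph d)} (hS : MeasurableSet S) {T : Set (Euc d)} (hT : volume T = 0)
    (h : ∀ x ∈ S, ∀ r : ℝ, 0 < r → r • (x : Euc d) ∈ T) : muSph d S = 0 := by
  rw [muSph_apply hS]
  have : volume (Set.Ioo (0 : ℝ) 1 • ((↑) '' S : Set (Euc d))) = 0 := by
    refine measure_mono_null ?_ hT
    rintro z hz
    obtain ⟨r, hr, y, ⟨x, hx, rfl⟩, rfl⟩ := Set.mem_smul.mp hz
    exact h x hx r hr.1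
  rw [this, mul_zero]

lemma null_singleton {d : ℕ} (hd : 1 ≤ d) (x : Sph d) : muSph d {x} = 0 := by
  refine null_of_cone (T := (Submodule.span ℝ {(x : Euc d)} : Submodule ℝ (Euc d)))
    (measurableSet_singleton x) (Measure.addHaar_submodule _ _ ?_) ?_
  · intro h
    have h1 := finrank_span_le_card (R := ℝ) ({(x : Euc d)} : Set (Euc d))
    rw [h, finrank_top] at h1
    simp at h1
    omega
  · intro y hy r _
    rw [Set.mem_singleton_iff.mp hy]
    exact Submodule.smul_mem _ _ (Submodule.subset_span rfl)

lemma meas_level {d : ℕ} : Measurable (fun x : Sph d => (x : Euc d) 0) := by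
  have : Continuous (fun x : Sph d => (x : Euc d) 0) := by fun_prop
  exact this.measurable

lemma null_level {d : ℕ} (hd : 1 ≤ d) (t : ℝ) : muSph d {x : Sph d | (x : Euc d) 0 = t} = 0 := by
  have hm : MeasurableSet {x : Sph d | (x : Euc d) 0 = t} := meas_level (measurableSet_singleton t)
  rcases lt_or_ge |t| 1 with ht | ht
  · refine null_of_cone (T := {z : Euc d | z 0 = t * ‖z‖}) hm ?_ ?_
    · have hmeas : MeasurableSet {z : Euc d | z 0 = t * ‖z‖} :=
        measurableSet_eq_fun (by fun_prop) (by fun_prop)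
      refine Measure.addHaar_eq_zero_of_disjoint_translates volume
        (fun k : ℕ => ((1 / ((k : ℝ) + 1)) • EuclideanSpace.single 0 1 : Euc d)) ?_ ?_ hmeas
      · rw [isBounded_iff_forall_norm_le]
        refine ⟨1, ?_⟩
        rintro _ ⟨k, rfl⟩
        simp only [norm_smul, PiLp.norm_single, norm_one, mul_one, Real.norm_eq_abs]
        rw [abs_of_nonneg (by positivity), div_le_one (by positivity)]
        have : (0 : ℝ) ≤ k := by positivity
        linarith
      · intro k l hkl
        rw [Function.onFun, Set.disjoint_left]
        intro z hz1 hz2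
        rw [Set.singleton_add, Set.mem_image] at hz1 hz2
        obtain ⟨u, hu, rfl⟩ := hz1
        obtain ⟨w, hw, hwu⟩ := hz2
        simp only [Set.mem_ofPred_eq] at hu hw
        have hw2 : w = u + ((1 / ((k : ℝ) + 1)) - (1 / ((l : ℝ) + 1))) • EuclideanSpace.single 0 1 := by
          rw [sub_smul, eq_comm, ← sub_eq_zero]
          rw [← sub_eq_zero] at hwu
          rw [← neg_eq_zero, ← hwu]
          abel
        set s := (1 / ((k : ℝ) + 1)) - (1 / ((l : ℝ) + 1)) with hs
        have h1 : w 0 = u 0 + s := by rw [hw2]; simp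
        have h2 : |‖w‖ - ‖u‖| ≤ |s| := by
          refine (abs_norm_sub_norm_le w u).trans ?_
          rw [hw2, add_sub_cancel_left, norm_smul]
          simp
        have h3 : s = t * (‖w‖ - ‖u‖) := by linarith
        have h4 : |s| ≤ |t| * |s| := by
          conv_lhs => rw [h3, abs_mul]
          gcongr
        have h5 : s = 0 := by
          by_contra h
          have := abs_pos.mpr h
          nlinarith
        apply hkl
        rw [hs, sub_eq_zero] at h5
        have h6 : (k : ℝ) + 1 = l + 1 := by
          have := congrArg (fun z : ℝ => z⁻¹) h5
          simpa using this
        have h7 : (k : ℝ) = l := by linarith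
        exact_mod_cast h7
    · intro x hx r hr
      simp only [Set.mem_ofPred_eq] at hx ⊢
      have : ‖(x : Euc d)‖ = 1 := by simp
      rw [norm_smul, this, mul_one, Real.norm_eq_abs, abs_of_pos hr, PiLp.smul_apply, hx, smul_eq_mul, mul_comm]
  · let i1 : Fin (d + 1) := ⟨1, by omega⟩
    refine null_of_cone (T := (LinearMap.ker (EuclideanSpace.proj i1 : Euc d →L[ℝ] ℝ).toLinearMap : Submodule ℝ (Euc d)))
      hm (Measure.addHaar_submodule _ _ ?_) ?_
    · intro h
      have : (EuclideanSpace.single i1 1 : Euc d) ∈ LinearMap.ker (EuclideanSpace.proj i1 : Euc d →L[ℝ] ℝ).toLinearMap := by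
        rw [h]; trivial
      simp at this
    · intro x hx r hr
      simp only [Set.mem_ofPred_eq] at hx
      have h1 := norm_sq_sum (x : Euc d) (by simp)
      have hne : (0 : Fin (d + 1)) ≠ i1 := by
        intro h; have := congrArg Fin.val h; simp [i1] at this
      have h2 : (x : Euc d) 0 * (x : Euc d) 0 + (x : Euc d) i1 * (x : Euc d) i1 ≤ 1 := by
        rw [← h1, ← Finset.sum_pair hne (f := fun i => (x : Euc d) i * (x : Euc d) i)]
        exact Finset.sum_le_sum_of_subset_of_nonneg (Finset.subset_univ _) fun i _ _ => mul_self_nonneg _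
      rw [hx] at h2
      have h3 : 1 ≤ t * t := by rw [← abs_mul_abs_self]; nlinarith
      have h4 : (x : Euc d) i1 * (x : Euc d) i1 = 0 := le_antisymm (by linarith) (mul_self_nonneg _)
      have h5 := mul_self_eq_zero.mp h4
      simp [h5]

/-- distribution function of the first coordinate -/
noncomputable def cdfS (d : ℕ) (t : ℝ) : ℝ := (muSph d).real {x : Sph d | (x : Euc d) 0 ≤ t}

lemma cdfS_cont {d : ℕ} (hd : 1 ≤ d) : Continuous (cdfS d) := by
  have hmeas : ∀ t, MeasurableSet {x : Sph d | (x : Euc d) 0 ≤ t} := fun t => meas_level measurableSet_Iic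
  have e : cdfS d = fun t => ∫ x : Sph d, ({x : Sph d | (x : Euc d) 0 ≤ t}.indicator (fun _ => (1 : ℝ)) x) ∂(muSph d) := by
    ext t
    rw [integral_indicator (hmeas t)]
    simp [cdfS]
  rw [e, continuous_iff_continuousAt]
  intro t
  refine continuousAt_of_dominated (bound := fun _ => 1) ?_ ?_ (integrable_const _) ?_
  · exact Filter.Eventually.of_forall fun s => (measurable_const.indicator (hmeas s)).aestronglyMeasurable
  · refine Filter.Eventually.of_forall fun s => Filter.Eventually.of_forall fun x => ?_
    rw [Set.indicator_apply]
    split_ifs <;> simp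
  · have h : ∀ᵐ x : Sph d ∂(muSph d), ¬ ((x : Euc d) 0 = t) := by
      rw [ae_iff]; simpa using null_level hd t
    filter_upwards [h] with x hx
    rcases lt_or_gt_of_ne hx with h | h
    · refine (continuousAt_const (y := (1 : ℝ))).congr ?_
      filter_upwards [lt_mem_nhds h] with s hs
      rw [Set.indicator_of_mem]
      exact hs.le
    · refine (continuousAt_const (y := (0 : ℝ))).congr ?_
      filter_upwards [gt_mem_nhds h] with s hs
      rw [Set.indicator_of_notMem]
      simpa using hs

lemma coord_bd {d : ℕ} (x : Sph d) : -1 ≤ (x : Euc d) 0 ∧ (x : Euc d) 0 ≤ 1 := by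
  have h1 := PiLp.norm_apply_le (x : Euc d) 0
  have : ‖(x : Euc d)‖ = 1 := by simp
  rw [this, Real.norm_eq_abs] at h1
  exact abs_le.mp h1

lemma partition_exists {d : ℕ} (hd : 1 ≤ d) {N : ℕ} (hN : 1 ≤ N) (x : Fin N → Sph d) :
    ∃ R : Fin N → Set (Sph d), IsAreaRegularPartition d N R ∧ ∀ i, x i ∈ R i := by
  have hNr : (0 : ℝ) < N := by exact_mod_cast hN
  have hF0 : cdfS d (-2) = 0 := by
    have : {x : Sph d | (x : Euc d) 0 ≤ -2} = ∅ := by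
      ext x; have := (coord_bd x).1; simp; linarith
    rw [cdfS, this]; simp
  have hF1 : cdfS d 2 = 1 := by
    have : {x : Sph d | (x : Euc d) 0 ≤ 2} = Set.univ := by
      ext x; have := (coord_bd x).2; simp; linarith
    rw [cdfS, this]; simp
  have hmono : Monotone (cdfS d) := fun s t hst => measureReal_mono (fun x hx => le_trans hx hst)
  have hex : ∀ i : ℕ, ∃ t, i ≤ N → cdfS d t = (i : ℝ) / N ∧ (i = 0 → t = -2) ∧ (i = N → t = 2) := by
    intro i
    by_cases hi : i ≤ N
    swap
    · exact ⟨0, fun h => absurd h hi⟩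
    by_cases h0 : i = 0
    · exact ⟨-2, fun _ => ⟨by simp [h0, hF0], fun _ => rfl, fun h => by omega⟩⟩
    by_cases h1 : i = N
    · exact ⟨2, fun _ => ⟨by rw [h1, hF1, div_self hNr.ne'], fun h => by omega, fun _ => rfl⟩⟩
    have := intermediate_value_Icc (by norm_num : (-2 : ℝ) ≤ 2) (cdfS_cont hd).continuousOn
    rw [hF0, hF1] at this
    have hiN : (i : ℝ) ≤ N := by exact_mod_cast hi
    obtain ⟨t, -, ht⟩ := this (⟨by positivity, by rw [div_le_one hNr]; exact hiN⟩ : (i : ℝ) / N ∈ Set.Icc (0 : ℝ) 1)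
    exact ⟨t, fun _ => ⟨ht, fun h => absurd h h0, fun h => absurd h h1⟩⟩
  choose τ hτ using hex
  have hτlt : ∀ i j, i < j → j ≤ N → τ i < τ j := by
    intro i j hij hj
    by_contra h
    have h1 := hmono (not_lt.mp h)
    rw [(hτ i (by omega)).1, (hτ j hj).1, div_le_div_iff_of_pos_right hNr] at h1
    have : j ≤ i := by exact_mod_cast h1
    omega
  have hτle : ∀ i j, i ≤ j → j ≤ N → τ i ≤ τ j := by
    intro i j hij hj
    rcases hij.eq_or_lt with rfl | h
    · exact le_rfl
    · exact (hτlt i j h hj).le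
  let R : Fin N → Set (Sph d) := fun i =>
    {y | τ i ≤ (y : Euc d) 0 ∧ (y : Euc d) 0 ≤ τ (i + 1)} ∪ {x i}
  have hIntg : ∀ i j : Fin N, i < j → interior (R i) ∩ interior (R j) = ∅ := by
    intro i j hij
    have hopen : IsOpen (interior (R i) ∩ interior (R j)) := isOpen_interior.inter isOpen_interior
    rw [← hopen.measure_eq_zero_iff (muSph d)]
    refine measure_mono_null (t := {y : Sph d | (y : Euc d) 0 = τ j} ∪ ({x i} ∪ {x j})) ?_ ?_
    · rintro y ⟨hy1, hy2⟩
      rcases interior_subset hy1 with h1 | h1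
      · rcases interior_subset hy2 with h2 | h2
        · left
          have := hτle (i + 1) j (by exact hij) j.2.le
          exact le_antisymm (h1.2.trans this) h2.1
        · right; right; exact h2
      · right; left; exact h1
    · rw [measure_union_null_iff, measure_union_null_iff]
      exact ⟨null_level hd _, null_singleton hd _, null_singleton hd _⟩
  refine ⟨R, ⟨?_, ?_, ?_, ?_⟩, fun i => Or.inr rfl⟩
  · intro i
    refine IsClosed.union ?_ isClosed_singleton
    have hc : Continuous (fun y : Sph d => (y : Euc d) 0) := by fun_prop
    exact (isClosed_le continuous_const hc).inter (isClosed_le hc continuous_const)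
  · rw [Set.eq_univ_iff_forall]
    intro y
    have hN2 : (y : Euc d) 0 ≤ τ N := by
      rw [(hτ N le_rfl).2.2 rfl]; linarith [(coord_bd y).2]
    classical
    have hexi : ∃ i, (y : Euc d) 0 ≤ τ i := ⟨N, hN2⟩
    have hs := Nat.find_spec hexi
    have hle : Nat.find hexi ≤ N := Nat.find_min' hexi hN2
    have h0 : Nat.find hexi ≠ 0 := by
      intro h
      rw [h, (hτ 0 (Nat.zero_le _)).2.1 rfl] at hs
      linarith [(coord_bd y).1]
    obtain ⟨j, hj⟩ := Nat.exists_eq_succ_of_ne_zero h0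
    have hm := Nat.find_min hexi (m := j) (by omega)
    rw [hj] at hs
    rw [Set.mem_iUnion]
    exact ⟨⟨j, by omega⟩, Or.inl ⟨(not_le.mp hm).le, hs⟩⟩
  · intro i j hij
    rcases lt_or_gt_of_ne hij with h | h
    · exact hIntg i j h
    · rw [Set.inter_comm]; exact hIntg j i h
  · intro i
    have hsub : {y : Sph d | (y : Euc d) 0 ≤ τ i} ⊆ {y : Sph d | (y : Euc d) 0 ≤ τ (i + 1)} := fun y hy =>
      le_trans hy (hτle i (i + 1) (by omega) i.2)
    have h1 : (muSph d).real ({y : Sph d | (y : Euc d) 0 ≤ τ (i + 1)} \ {y : Sph d | (y : Euc d) 0 ≤ τ i}) = 1 / N := by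
      rw [measureReal_sdiff hsub (meas_level measurableSet_Iic)]
      change cdfS d _ - cdfS d _ = _
      rw [(hτ (i + 1) i.2).1, (hτ i i.2.le).1]
      push_cast
      ring
    have h2 : muSph d ({y : Sph d | (y : Euc d) 0 ≤ τ (i + 1)} \ {y : Sph d | (y : Euc d) 0 ≤ τ i}) = 1 / N := by
      rw [← ofReal_measureReal, h1, ENNReal.ofReal_div_of_pos hNr, ENNReal.ofReal_one, ENNReal.ofReal_natCast]
    apply le_antisymm
    · have h3 : R i ⊆ ({y : Sph d | (y : Euc d) 0 ≤ τ (i + 1)} \ {y : Sph d | (y : Euc d) 0 ≤ τ i}) ∪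
          ({y : Sph d | (y : Euc d) 0 = τ i} ∪ {x i}) := by
        rintro y (⟨ha, hb⟩ | h)
        · rcases ha.eq_or_lt with h | h
          · right; left; exact h.symm
          · left; exact ⟨hb, not_le.mpr h⟩
        · right; right; exact h
      refine (measure_mono h3).trans ((measure_union_le _ _).trans ?_)
      rw [h2, measure_union_null (null_level hd _) (null_singleton hd _), add_zero]
    · rw [← h2]
      apply measure_mono
      rintro y ⟨ha, hb⟩
      left
      exact ⟨(not_le.mp hb).le, ha⟩

end partition


/-- For every `d ≥ 1` there is `b_d` such that for all `n, N ≥ 1` there are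
an area-regular partition `R_1,…,R_N` of `S^d` and points `x_i ∈ R_i` with
`‖(1/N)(G_{x_1}+…+G_{x_N})‖_w ≤ b_d n^{d/2} / N^{1/2+1/d}`. -/
theorem statement2 (d : ℕ) (hd : 1 ≤ d) :
    ∃ b : ℝ, 0 < b ∧ ∀ n N : ℕ, 1 ≤ n → 1 ≤ N →
      ∃ R : Fin N → Set (Sph d), IsAreaRegularPartition d N R ∧
        ∃ x : Fin N → Sph d, (∀ i, x i ∈ R i) ∧
          normW d n ((N : ℝ)⁻¹ • ∑ i, GxFun d n (x i : Euc d)) ≤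
            b * (n : ℝ) ^ ((d : ℝ) / 2) / (N : ℝ) ^ ((1 : ℝ) / 2 + 1 / (d : ℝ)) := by
  have hd0 : (d : ℝ) ≠ 0 := by positivity
  have hdpos : (0 : ℝ) < d := by positivity
  set A : ℝ := (16 : ℝ) ^ (d + 1) with hA
  have hApos : 0 < A := by positivity
  set c : ℝ := A ^ (1 / (d : ℝ)) with hc
  have hcpos : 0 < c := by positivity
  refine ⟨Real.sqrt (144 * (d : ℝ) ^ d) * c, by positivity, ?_⟩
  intro n N hn hN
  have hNpos : (0 : ℝ) < N := by positivity
  have hnpos : (0 : ℝ) < n := by positivity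
  set m : ℝ := (N : ℝ) ^ (1 / (d : ℝ)) with hm
  have hmpos : 0 < m := by positivity
  have hcd : c ^ d = A := by
    rw [hc, ← Real.rpow_natCast, ← Real.rpow_mul hApos.le, one_div_mul_cancel hd0, Real.rpow_one]
  have hmd : m ^ d = N := by
    rw [hm, ← Real.rpow_natCast, ← Real.rpow_mul hNpos.le, one_div_mul_cancel hd0, Real.rpow_one]
  have hr : 0 < c / m := by positivity
  have hrd : (c / m) ^ d / 16 ^ (d + 1) = (N : ℝ)⁻¹ := by
    rw [div_pow, hcd, hmd, ← hA]
    field_simp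
  have hr1 : (c / m) ^ d / 16 ^ (d + 1) ≤ 1 := by
    rw [hrd]
    exact inv_le_one_of_one_le₀ (by exact_mod_cast hN)
  obtain ⟨x, hx⟩ := points_exist (d := d) hd n (N := N) (δ := 2 * (c / m)) hN (by positivity) (by
    intro y
    have h := cap_lower' y hr hr1
    rw [hrd, ENNReal.ofReal_inv_of_pos hNpos, ENNReal.ofReal_natCast] at h
    have e : 2 * (c / m) / 2 = c / m := by ring
    rw [e]
    exact h)
  obtain ⟨R, hR, hxR⟩ := partition_exists hd hN x
  refine ⟨R, hR, x, hxR, ?_⟩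
  rw [normW, normW_sq hd n N x]
  refine Real.sqrt_le_iff.mpr ⟨by positivity, ?_⟩
  have e1 : ((n : ℝ) ^ ((d : ℝ) / 2)) ^ 2 = (n : ℝ) ^ d := by
    rw [← Real.rpow_natCast, ← Real.rpow_mul hnpos.le, ← Real.rpow_natCast]
    congr 1
    push_cast
    ring
  have e2 : (N : ℝ) ^ ((1 : ℝ) / 2 + 1 / (d : ℝ)) = Real.sqrt N * m := by
    rw [Real.rpow_add hNpos, Real.sqrt_eq_rpow]
  have e3 : (Real.sqrt (N : ℝ)) ^ 2 = N := Real.sq_sqrt hNpos.le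
  have e4 : (Real.sqrt (144 * (d : ℝ) ^ d)) ^ 2 = 144 * (d : ℝ) ^ d := Real.sq_sqrt (by positivity)
  rw [e2, div_pow, mul_pow, mul_pow, mul_pow, e1, e3, e4]
  calc _ ≤ (N : ℝ)⁻¹ * (N : ℝ)⁻¹ * ((N : ℝ) * (2 * (d : ℝ) ^ d * (n : ℝ) ^ d * (18 * (2 * (c / m)) ^ 2))) :=
        mul_le_mul_of_nonneg_left hx (by positivity)
    _ = _ := by
        field_simp
        ring
end
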